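/- arXiv:2412.13929 — 5 statements merged into one kernel-verified Lean document; each statement's English description precedes it below -/
import Mathlib

section
/- Let τ > 0, ξ ∈ ℝ, and let N : [0,τ] → ℝ be integrable, and define Δ(s) = 1 − ξ e^{−sτ} − ∫₀^τ N(ν) e^{−sν} dν. The integral difference equation z(t) = ξ z(t−τ) + ∫₀^τ N(ν) z(t−ν) dν is exponentially stable in the L² norm if and only if there exists η > 0 such that every solution s ∈ ℂ of the characteristic equation Δ(s) = 0 satisfies Re(s) ≤ −η. -/
/-!
The equivalence is between exponential decay of solutions and a spectral gap of the characteristic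
function `Δ`.

*Stability gives the gap.* If `Δ s = 0`, then `Re e^{st}` and `Im e^{st}` are solutions
(`isSolutionIDE_of_root`), and the decay estimates for the two together force `Re s ≤ -η` with the same
decay rate `η` (`root_re_le`).

*The gap gives stability.* `N` is replaced by a Borel kernel `K` supported in `(0, τ]`, and a solution is
extended by zero to the left of `-τ`. The argument takes place in the weighted spaces
`{Z | e^{-γt} Z ∈ L²(ℝ)}`, in which the operator `1 - A`, with `A Z = ξ Z(· - τ) + K * Z`, has symbol `Δ`
on the line `Re s = γ`.

* The gap forces `|ξ| < 1` (`abs_lt_one_of_gap`): otherwise the Riemann–Lebesgue lemma and the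
  quantitative open mapping theorem produce roots of `Δ` near the zeros of `1 - ξ e^{-sτ}` of large
  imaginary part. Hence `|Δ|` is bounded below on every strip `-η' ≤ Re s ≤ b` with `η' > 0` small
  (`charFn_lower_bound`), and Plancherel turns this into a lower bound for `1 - A` on `L¹ ∩ L²`
  (`coercive_delayOp`).
* For `γ` large, `A` is a contraction in the weighted space, and every solution satisfies
  `e^{-γt} Z ∈ L²` (`growth_bound`).
* If `e^{-γt} Z ∈ L²`, then `e^{-(γ-h)t} Z ∈ L²` for a step `h` that depends only on the lower bound of
  `|Δ|`, with a norm controlled by the initial datum (`weight_step`). Here the weight is truncated at a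
  time `n`, which makes the functions a priori integrable; the truncation costs an error of relative
  size `e^{2hτ} - 1`, absorbed by coercivity, and then `n → ∞`.
* Finitely many steps reach the exponent `-η'` (`stable_bound`), and restriction to the window
  `[t - τ, t]` gives the decay in `L²` norm (`stable_of_gap`).

A solution is only required to have an integrable square, so its measurability is not part of the
hypotheses. It is deduced from the equation in `measurable_of_solution`, with attention to the
convention that the integral of a non-integrable function is `0`.
-/

open MeasureTheory Complex

/-- `z : ℝ → ℝ` (whose values matter on `[-τ, ∞)`) is a solution of the integral
difference equation `z(t) = ξ z(t-τ) + ∫₀^τ N(ν) z(t-ν) dν` with initial condition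
of class `H¹([-τ,0])` satisfying the compatibility condition. -/
def IsSolutionIDE (τ ξ : ℝ) (N : ℝ → ℝ) (z : ℝ → ℝ) : Prop :=
  (∀ T : ℝ, IntervalIntegrable (fun t => (z t) ^ 2) volume (-τ) T) ∧
  (∃ g : ℝ → ℝ, IntervalIntegrable (fun t => (g t) ^ 2) volume (-τ) 0 ∧
    ∀ θ ∈ Set.Icc (-τ) (0:ℝ), z θ = z (-τ) + ∫ s in (-τ)..θ, g s) ∧
  (z 0 = ξ * z (-τ) + ∫ ν in (0:ℝ)..τ, N ν * z (-ν)) ∧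
  (∀ t : ℝ, 0 ≤ t → z t = ξ * z (t - τ) + ∫ ν in (0:ℝ)..τ, N ν * z (t - ν))

/-- Exponential stability in the `L²` norm of the integral difference equation. -/
def ExpStableIDE (τ ξ : ℝ) (N : ℝ → ℝ) : Prop :=
  ∃ C : ℝ, 0 ≤ C ∧ ∃ η : ℝ, 0 < η ∧ ∀ z : ℝ → ℝ, IsSolutionIDE τ ξ N z →
    ∀ t : ℝ, 0 ≤ t →
      Real.sqrt (∫ θ in (-τ)..0, (z (t + θ)) ^ 2) ≤
        C * Real.exp (-η * t) * Real.sqrt (∫ θ in (-τ)..0, (z θ) ^ 2)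

/-! ### Plancherel on `L¹ ∩ L²` -/

section

open MeasureTheory FourierTransform SchwartzMap

/-- For `f ∈ L¹ ∩ L²`, the Fourier transform of `f` as an element of `L²` agrees almost everywhere
with the Fourier integral of `f`. Both are locally integrable, and they have the same integral against
every smooth compactly supported function: for the first through tempered distributions, for the
second by Fubini. -/
lemma fourier_toLp_ae (f : ℝ → ℂ) (h1 : Integrable f) (h2 : MemLp f 2) :
    ((𝓕 (h2.toLp f) : Lp ℂ 2 (volume : Measure ℝ)) : ℝ → ℂ) =ᵐ[volume] 𝓕 f := by
  have hc : Continuous (𝓕 f) := VectorFourier.fourierIntegral_continuous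
      Real.continuous_fourierChar continuous_inner h1
  have hL : LocallyIntegrable ((𝓕 (h2.toLp f) : Lp ℂ 2 (volume : Measure ℝ)) : ℝ → ℂ) volume :=
    (Lp.memLp _).locallyIntegrable (by norm_num)
  refine ae_eq_of_integral_contDiff_smul_eq hL hc.locallyIntegrable ?_
  intro g hg hgc
  have hgc' : HasCompactSupport (fun x => (g x : ℂ)) := hgc.comp_left (g := fun x : ℝ => (x : ℂ)) (by simp)
  have hg' : ContDiff ℝ (⊤ : ℕ∞) (fun x => (g x : ℂ)) := Complex.ofRealCLM.contDiff.comp hg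
  let φ : 𝓢(ℝ, ℂ) := hgc'.toSchwartzMap hg'
  have key := congrArg (fun T : 𝓢'(ℝ, ℂ) => T φ) (Lp.fourier_toTemperedDistribution_eq (h2.toLp f))
  simp only [TemperedDistribution.fourier_apply, Lp.toTemperedDistribution_apply] at key
  have e1 : ∫ x, g x • ((𝓕 (h2.toLp f) : Lp ℂ 2 (volume : Measure ℝ)) : ℝ → ℂ) x
      = ∫ x, φ x • ((𝓕 (h2.toLp f) : Lp ℂ 2 (volume : Measure ℝ)) : ℝ → ℂ) x := by
    apply integral_congr_ae; filter_upwards with x; simp [φ]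
  have e2 : ∫ x, (𝓕 φ) x • (h2.toLp f) x = ∫ x, (𝓕 φ) x • f x := by
    apply integral_congr_ae; filter_upwards [h2.coeFn_toLp] with x hx; rw [hx]
  have e3 : ∫ x, (𝓕 φ) x • f x = ∫ x, φ x • 𝓕 f x := by
    have := VectorFourier.integral_fourierIntegral_smul_eq_flip (μ := volume) (ν := volume) (L := innerₗ ℝ)
      (f := (φ : ℝ → ℂ)) (g := f) Real.continuous_fourierChar continuous_inner φ.integrable h1
    rw [SchwartzMap.fourier_coe]
    rw [flip_innerₗ] at this
    exact this
  rw [e1, ← key, e2, e3]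
  apply integral_congr_ae; filter_upwards with x; simp [φ]

lemma plancherel_L1_L2 (f : ℝ → ℂ) (h1 : Integrable f) (h2 : MemLp f 2) :
    eLpNorm (𝓕 f) 2 volume = eLpNorm f 2 volume := by
  rw [← eLpNorm_congr_ae (fourier_toLp_ae f h1 h2)]
  have := Lp.norm_fourier_eq (h2.toLp f)
  rw [Lp.norm_def, Lp.norm_toLp] at this
  exact (ENNReal.toReal_eq_toReal_iff' (Lp.eLpNorm_ne_top _) h2.2.ne).1 this

end

/-! ### The delay operator and its majorant -/

section

open MeasureTheory FourierTransform
open scoped ENNReal Convolution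

/-- The delay operator `f ↦ c f(· - τ) + k * f`, which drives the equation `f = delayOp f`. The kernel
`k` lives on the whole line; in the applications it vanishes outside `(0, τ]`. -/
noncomputable def delayOp (τ : ℝ) (c : ℂ) (k : ℝ → ℂ) (f : ℝ → ℂ) (t : ℝ) : ℂ :=
  c * f (t - τ) + ∫ ν, k ν * f (t - ν)

/-- The positive majorant of `delayOp`, in `ℝ≥0∞` so that no integrability is needed to form it. -/
noncomputable def delayMaj (τ : ℝ) (c : ℝ≥0∞) (k : ℝ → ℝ≥0∞) (f : ℝ → ℝ≥0∞) (t : ℝ) : ℝ≥0∞ :=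
  c * f (t - τ) + ∫⁻ ν, k ν * f (t - ν)

lemma enorm_delayOp_le (τ : ℝ) (c : ℂ) (k f : ℝ → ℂ) (t : ℝ) :
    ‖delayOp τ c k f t‖ₑ ≤ delayMaj τ ‖c‖ₑ (fun ν => ‖k ν‖ₑ) (fun x => ‖f x‖ₑ) t := by
  unfold delayOp delayMaj
  refine (enorm_add_le _ _).trans ?_
  rw [enorm_mul]
  gcongr
  refine (enorm_integral_le_lintegral_enorm _).trans ?_
  simp [enorm_mul]

lemma eLpNorm_two_sq (f : ℝ → ℝ≥0∞) : (eLpNorm f 2 volume) ^ 2 = ∫⁻ t, f t ^ 2 := by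
  rw [eLpNorm_eq_lintegral_rpow_enorm_toReal (by norm_num) (by norm_num)]
  rw [← ENNReal.rpow_natCast, ← ENNReal.rpow_mul]
  norm_num

lemma eLpNorm_enorm_eq {f : ℝ → ℂ} : eLpNorm (fun x => ‖f x‖ₑ) 2 volume = eLpNorm f 2 volume := by
  exact eLpNorm_enorm f

/-- The Cauchy–Schwarz inequality for the measure with density `k`. -/
lemma cauchy_schwarz_weight {k f : ℝ → ℝ≥0∞} (hk : AEMeasurable k) (hf : AEMeasurable f) :
    (∫⁻ ν, k ν * f ν) ^ 2 ≤ (∫⁻ ν, k ν) * ∫⁻ ν, k ν * f ν ^ 2 := by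
  have h := ENNReal.lintegral_mul_le_Lp_mul_Lq volume (Real.HolderConjugate.two_two)
    (f := fun ν => (k ν) ^ (1 / 2 : ℝ)) (g := fun ν => (k ν) ^ (1 / 2 : ℝ) * f ν)
    (hk.pow_const _) ((hk.pow_const _).mul hf)
  have e1 : ∀ ν, (k ν) ^ (1 / 2 : ℝ) * ((k ν) ^ (1 / 2 : ℝ) * f ν) = k ν * f ν := by
    intro ν
    rw [← mul_assoc, ← ENNReal.rpow_add_of_nonneg _ _ (by norm_num) (by norm_num)]
    norm_num
  have e2 : ∀ ν, ((k ν) ^ (1 / 2 : ℝ)) ^ (2 : ℝ) = k ν := by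
    intro ν; rw [← ENNReal.rpow_mul]; norm_num
  have e3 : ∀ ν, ((k ν) ^ (1 / 2 : ℝ) * f ν) ^ (2 : ℝ) = k ν * f ν ^ 2 := by
    intro ν; rw [ENNReal.mul_rpow_of_nonneg _ _ (by norm_num), e2]; norm_num
  simp only [Pi.mul_apply, e1, e2, e3] at h
  calc _ ≤ _ := pow_le_pow_left' h 2
    _ = _ := by
      rw [mul_pow, ← ENNReal.rpow_natCast, ← ENNReal.rpow_natCast, ← ENNReal.rpow_mul,
        ← ENNReal.rpow_mul]
      norm_num

/-- Young's inequality `L¹ * L² ⊆ L²`. -/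
lemma young_L1_L2 {k f : ℝ → ℝ≥0∞} (hk : AEMeasurable k) (hf : AEMeasurable f) :
    eLpNorm (fun t => ∫⁻ ν, k ν * f (t - ν)) 2 volume ≤ (∫⁻ ν, k ν) * eLpNorm f 2 volume := by
  rw [← (ENNReal.pow_right_strictMono (n := 2) (by norm_num)).le_iff_le]
  show _ ^ 2 ≤ _ ^ 2
  rw [mul_pow, eLpNorm_two_sq, eLpNorm_two_sq]
  have hmp : ∀ t : ℝ, MeasurePreserving (fun ν : ℝ => t - ν) volume volume :=
    fun t => Measure.measurePreserving_sub_left volume t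
  have hmp' : ∀ t : ℝ, MeasurePreserving (fun ν : ℝ => ν - t) volume volume :=
    fun t => measurePreserving_sub_right volume t
  have hk1 : AEMeasurable (fun p : ℝ × ℝ => k p.2) (volume.prod volume) :=
    hk.comp_quasiMeasurePreserving Measure.quasiMeasurePreserving_snd
  have hf1 : AEMeasurable (fun p : ℝ × ℝ => f (p.1 - p.2)) (volume.prod volume) :=
    hf.comp_quasiMeasurePreserving (quasiMeasurePreserving_sub_of_right_invariant _ _)
  calc ∫⁻ t, (∫⁻ ν, k ν * f (t - ν)) ^ 2
      ≤ ∫⁻ t, (∫⁻ ν, k ν) * ∫⁻ ν, k ν * f (t - ν) ^ 2 := by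
        refine lintegral_mono fun t => ?_
        exact cauchy_schwarz_weight hk (hf.comp_quasiMeasurePreserving (hmp t).quasiMeasurePreserving)
    _ = (∫⁻ ν, k ν) * ∫⁻ t, ∫⁻ ν, k ν * f (t - ν) ^ 2 := by
        rw [lintegral_const_mul'']
        exact (hk1.mul (hf1.pow_const 2)).lintegral_prod_right'
    _ = (∫⁻ ν, k ν) * ∫⁻ ν, ∫⁻ t, k ν * f (t - ν) ^ 2 := by
        rw [lintegral_lintegral_swap]
        exact hk1.mul (hf1.pow_const 2)
    _ = (∫⁻ ν, k ν) * ∫⁻ ν, k ν * ∫⁻ t, f t ^ 2 := by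
        congr 1
        refine lintegral_congr fun ν => ?_
        rw [lintegral_const_mul'']
        · congr 1
          exact lintegral_sub_right_eq_self (fun t => f t ^ 2) ν
        · exact (hf.comp_quasiMeasurePreserving (hmp' ν).quasiMeasurePreserving).pow_const 2
    _ = (∫⁻ ν, k ν) * ((∫⁻ ν, k ν) * ∫⁻ t, f t ^ 2) := by
        rw [lintegral_mul_const'' _ hk]
    _ = _ := by ring

lemma eLpNorm_sub_right {f : ℝ → ℝ≥0∞} (hf : AEMeasurable f) (τ : ℝ) :
    eLpNorm (fun t => f (t - τ)) 2 volume = eLpNorm f 2 volume :=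
  eLpNorm_comp_measurePreserving hf.aestronglyMeasurable (measurePreserving_sub_right volume τ)

lemma aemeasurable_delayMaj (τ : ℝ) {c : ℝ≥0∞} {k f : ℝ → ℝ≥0∞} (hk : AEMeasurable k)
    (hf : AEMeasurable f) : AEMeasurable (delayMaj τ c k f) := by
  have hfτ : AEMeasurable (fun t => f (t - τ)) :=
    hf.comp_quasiMeasurePreserving (measurePreserving_sub_right volume τ).quasiMeasurePreserving
  have hk1 : AEMeasurable (fun p : ℝ × ℝ => k p.2) (volume.prod volume) :=
    hk.comp_quasiMeasurePreserving Measure.quasiMeasurePreserving_snd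
  have hf1 : AEMeasurable (fun p : ℝ × ℝ => f (p.1 - p.2)) (volume.prod volume) :=
    hf.comp_quasiMeasurePreserving (quasiMeasurePreserving_sub_of_right_invariant _ _)
  exact (hfτ.const_mul c).add (hk1.mul hf1).lintegral_prod_right'

lemma eLpNorm_delayMaj_le (τ : ℝ) {c : ℝ≥0∞} {k f : ℝ → ℝ≥0∞} (hk : AEMeasurable k)
    (hf : AEMeasurable f) :
    eLpNorm (delayMaj τ c k f) 2 volume ≤ (c + ∫⁻ ν, k ν) * eLpNorm f 2 volume := by
  have hmp : MeasurePreserving (fun ν : ℝ => ν - τ) volume volume :=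
    measurePreserving_sub_right volume τ
  have hfτ : AEMeasurable (fun t => f (t - τ)) :=
    hf.comp_quasiMeasurePreserving hmp.quasiMeasurePreserving
  have hk1 : AEMeasurable (fun p : ℝ × ℝ => k p.2) (volume.prod volume) :=
    hk.comp_quasiMeasurePreserving Measure.quasiMeasurePreserving_snd
  have hf1 : AEMeasurable (fun p : ℝ × ℝ => f (p.1 - p.2)) (volume.prod volume) :=
    hf.comp_quasiMeasurePreserving (quasiMeasurePreserving_sub_of_right_invariant _ _)
  have hconv : AEMeasurable (fun t => ∫⁻ ν, k ν * f (t - ν)) :=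
    (hk1.mul hf1).lintegral_prod_right'
  calc _ ≤ eLpNorm (fun t => c * f (t - τ)) 2 volume
        + eLpNorm (fun t => ∫⁻ ν, k ν * f (t - ν)) 2 volume :=
        eLpNorm_add_le (hfτ.const_mul c).aestronglyMeasurable hconv.aestronglyMeasurable (by norm_num)
    _ ≤ c * eLpNorm f 2 volume + (∫⁻ ν, k ν) * eLpNorm f 2 volume := by
        gcongr
        · rw [← (ENNReal.pow_right_strictMono (n := 2) (by norm_num)).le_iff_le]
          show _ ^ 2 ≤ _ ^ 2
          rw [mul_pow, ← eLpNorm_sub_right hf τ, eLpNorm_two_sq, eLpNorm_two_sq,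
            ← lintegral_const_mul'' _ (hfτ.pow_const 2)]
          simp [mul_pow]
        · exact young_L1_L2 hk hf
    _ = _ := by ring

lemma fourier_translate (f : ℝ → ℂ) (τ ω : ℝ) :
    𝓕 (fun t => f (t - τ)) ω = Complex.exp (-(2 * Real.pi * ω * τ) * Complex.I) * 𝓕 f ω := by
  rw [Real.fourier_real_eq_integral_exp_smul, Real.fourier_real_eq_integral_exp_smul,
    ← integral_const_mul]
  rw [← integral_add_right_eq_self _ τ]
  congr 1; ext v
  simp only [add_sub_cancel_right, smul_eq_mul]
  rw [← mul_assoc, ← Complex.exp_add]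
  congr 2
  push_cast; ring

lemma integrable_exp_smul {g : ℝ → ℂ} (hg : Integrable g) (ω : ℝ) :
    Integrable (fun v : ℝ => Complex.exp (↑(-2 * Real.pi * v * ω) * Complex.I) • g v) := by
  have hb : ∀ᵐ v : ℝ, ‖Complex.exp (↑(-2 * Real.pi * v * ω) * Complex.I)‖ ≤ 1 :=
    Filter.Eventually.of_forall fun v => (Complex.norm_exp_ofReal_mul_I _).le
  have hc : Continuous fun v : ℝ => Complex.exp (↑(-2 * Real.pi * v * ω) * Complex.I) := by
    fun_prop
  exact hg.bdd_mul hc.aestronglyMeasurable hb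

/-- If the symbol `1 - c e^{-2πiωτ} - k̂(ω)` of `1 - delayOp` is at least `δ` in modulus for every `ω`,
then `‖(1 - delayOp) f‖₂ ≥ δ ‖f‖₂`, by Plancherel. The lower bound is proved for `f ∈ L¹ ∩ L²`, where
the Fourier transform is given by an integral. -/
lemma coercive_delayOp (τ : ℝ) (c : ℂ) {k f : ℝ → ℂ} (hk : Integrable k) (h1 : Integrable f)
    (h2 : MemLp f 2) {δ : ℝ}
    (hsym : ∀ ω : ℝ, δ ≤ ‖1 - c * Complex.exp (-(2 * Real.pi * ω * τ) * Complex.I) - 𝓕 k ω‖) :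
    ENNReal.ofReal δ * eLpNorm f 2 volume ≤ eLpNorm (fun t => f t - delayOp τ c k f t) 2 volume := by
  set h : ℝ → ℂ := fun t => f t - delayOp τ c k f t with hh
  have hfτ : Integrable (fun t => f (t - τ)) := h1.comp_sub_right τ
  have hconv : Integrable (k ⋆[ContinuousLinearMap.mul ℂ ℂ, volume] f) :=
    hk.integrable_convolution _ h1
  have hconv' : (fun t => ∫ ν, k ν * f (t - ν)) = (k ⋆[ContinuousLinearMap.mul ℂ ℂ, volume] f) := by
    ext t; simp [convolution]
  have hAi : h = f - (c • (fun t => f (t - τ)) + (k ⋆[ContinuousLinearMap.mul ℂ ℂ, volume] f)) := by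
    rw [← hconv']; ext t; simp [hh, delayOp]
  have hhi : Integrable h := by
    rw [hAi]; exact h1.sub ((hfτ.smul c).add hconv)
  by_cases hfin : eLpNorm h 2 volume = ⊤
  · rw [hfin]; exact le_top
  have hh2 : MemLp h 2 := ⟨hhi.1, lt_top_iff_ne_top.2 hfin⟩
  rw [← plancherel_L1_L2 f h1 h2, ← plancherel_L1_L2 h hhi hh2]
  have hF : ∀ ω, 𝓕 h ω =
      (1 - c * Complex.exp (-(2 * Real.pi * ω * τ) * Complex.I) - 𝓕 k ω) * 𝓕 f ω := by
    intro ω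
    have a1 : 𝓕 h ω = 𝓕 f ω - (c * 𝓕 (fun t => f (t - τ)) ω
        + 𝓕 (k ⋆[ContinuousLinearMap.mul ℂ ℂ, volume] f) ω) := by
      have hchar := fun (g : ℝ → ℂ) (hg : Integrable g) => integrable_exp_smul hg ω
      simp only [Real.fourier_real_eq_integral_exp_smul]
      rw [← integral_const_mul, ← integral_add ((hchar _ hfτ).const_mul c) (hchar _ hconv)]
      refine Eq.trans ?_
        (integral_sub (hchar _ h1) (((hchar _ hfτ).const_mul c).add (hchar _ hconv)))
      congr 1; ext v
      rw [hAi]; simp; ring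
    rw [a1, fourier_translate, Real.fourier_mul_convolution_eq hk h1]; ring
  rw [← eLpNorm_enorm (𝓕 f), ← eLpNorm_enorm (𝓕 h),
    ← (ENNReal.pow_right_strictMono (n := 2) (by norm_num)).le_iff_le]
  show _ ^ 2 ≤ _ ^ 2
  rw [mul_pow, eLpNorm_two_sq, eLpNorm_two_sq, ← lintegral_const_mul' _ _ (by finiteness)]
  refine lintegral_mono fun ω => ?_
  simp only
  rw [hF, enorm_mul, mul_pow]
  gcongr
  rw [← ofReal_norm]
  exact ENNReal.ofReal_le_ofReal (hsym ω)

end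

/-! ### Measurability of solutions -/

section

open MeasureTheory Set
open scoped ENNReal

/-- For any function `f` there is a set `V` on which `f` is a.e. measurable and which is largest up to
null sets among the measurable sets with this property. -/
lemma exists_maximal_measurability_set {α : Type*} [MeasurableSpace α] (μ : Measure α)
    [IsFiniteMeasure μ] (f : α → ℝ) :
    ∃ V, MeasurableSet V ∧ AEMeasurable f (μ.restrict V) ∧
      ∀ W, MeasurableSet W → AEMeasurable f (μ.restrict W) → μ (W \ V) = 0 := by
  let C : Set (Set α) := {V | MeasurableSet V ∧ AEMeasurable f (μ.restrict V)}
  have hne : (μ '' C).Nonempty := ⟨μ ∅, ∅, ⟨MeasurableSet.empty, by simp⟩, rfl⟩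
  obtain ⟨u, -, hu, huC⟩ := exists_seq_tendsto_sSup hne (OrderTop.bddAbove _)
  choose V hV hVu using huC
  have hUC : (⋃ n, V n) ∈ C :=
    ⟨MeasurableSet.iUnion fun n => (hV n).1, AEMeasurable.iUnion fun n => (hV n).2⟩
  have hsup : sSup (μ '' C) ≤ μ (⋃ n, V n) := by
    refine le_of_tendsto' hu fun n => ?_
    rw [← hVu n]
    exact measure_mono (subset_iUnion V n)
  refine ⟨⋃ n, V n, hUC.1, hUC.2, fun W hW hfW => ?_⟩
  have hWU : (⋃ n, V n) ∪ W ∈ C := by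
    refine ⟨hUC.1.union hW, ?_⟩
    rw [aemeasurable_union_iff]
    exact ⟨hUC.2, hfW⟩
  have h1 : μ ((⋃ n, V n) ∪ W) ≤ μ (⋃ n, V n) :=
    (le_sSup (mem_image_of_mem _ hWU)).trans hsup
  rw [← union_sdiff_self, measure_union disjoint_sdiff_self_right (hW.diff hUC.1)] at h1
  by_contra h0
  exact absurd h1 (not_le.2 (ENNReal.lt_add_right (measure_ne_top _ _) h0))

/-- One delay step of the proof that solutions are measurable: measurability on `[-τ, a]` propagates to
`[-τ, a + τ]`. Values of `z` up to `t` enter the integral in the equation for `z t`, so the conclusion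
cannot be read off from the equation. Instead let `V` be the largest set on which `z` is measurable.
The integral is `0` by convention at those `t` for which the integrand is not measurable, which happens
as soon as `t - supp K` meets the complement of `V` in a set of positive measure; at all other `t` the
function `z` may be replaced by its restriction to `V`. Both the set of such `t` and the resulting
convolution are measurable. -/
lemma measurable_step {τ ξ : ℝ} (hτ : 0 < τ) {K z : ℝ → ℝ} (hK : Measurable K)
    (hKs : ∀ ν, ν ∉ Ioc 0 τ → K ν = 0)
    (hz : ∀ t, 0 ≤ t → z t = ξ * z (t - τ) + ∫ ν, K ν * z (t - ν)) {a : ℝ} (ha : 0 ≤ a)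
    (hm : AEMeasurable z (volume.restrict (Icc (-τ) a))) :
    AEMeasurable z (volume.restrict (Icc (-τ) (a + τ))) := by
  set J : Set ℝ := Icc (-τ) (a + τ) with hJ
  obtain ⟨V, hV, hVm, hVmax⟩ := exists_maximal_measurability_set (volume.restrict J) z
  rw [Measure.restrict_restrict hV] at hVm
  have hVJ : MeasurableSet (V ∩ J) := hV.inter measurableSet_Icc
  set z1 : ℝ → ℝ := (V ∩ J).indicator z with hz1
  have hz1m : AEMeasurable z1 volume := (aemeasurable_indicator_iff hVJ).2 hVm
  -- `q t` is the measure of the set of `ν` with `K ν ≠ 0` and `t - ν ∉ V`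
  let S : Set ℝ := {ν | K ν ≠ 0}
  have hS : MeasurableSet S := hK (measurableSet_singleton (0:ℝ)).compl
  let D : Set (ℝ × ℝ) := {p | p.2 ∈ S ∧ p.1 - p.2 ∉ V}
  have hD : MeasurableSet D :=
    (measurable_snd hS).inter ((measurable_fst.sub measurable_snd) hV.compl)
  let q : ℝ → ℝ≥0∞ := fun t => volume (Prod.mk t ⁻¹' D)
  have hq : Measurable q := measurable_measure_prodMk_left hD
  have hSτ : S ⊆ Ioc 0 τ := fun ν hν => by
    by_contra h; exact hν (hKs ν h)
  have hmem : ∀ t ∈ Icc a (a + τ), ∀ ν ∈ S, t - ν ∈ J := by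
    intro t ht ν hν
    have := hSτ hν
    exact ⟨by linarith [ht.1, this.2], by linarith [ht.2, this.1]⟩
  have hI : ∀ t ∈ Icc a (a + τ), ∫ ν, K ν * z (t - ν) =
      ({t | q t = 0} : Set ℝ).indicator (fun t => ∫ ν, K ν * z1 (t - ν)) t := by
    intro t ht
    by_cases hqt : q t = 0
    · rw [indicator_of_mem (by exact hqt)]
      refine integral_congr_ae ?_
      have : ∀ᵐ ν ∂volume, ν ∉ Prod.mk t ⁻¹' D := measure_eq_zero_iff_ae_notMem.1 hqt
      filter_upwards [this] with ν hν
      by_cases hνS : ν ∈ S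
      · have hνV : t - ν ∈ V := by
          by_contra h; exact hν ⟨hνS, h⟩
        rw [hz1, indicator_of_mem (show t - ν ∈ V ∩ J from ⟨hνV, hmem t ht ν hνS⟩)]
      · have : K ν = 0 := by simpa [S] using hνS
        simp [this]
    · rw [indicator_of_notMem (by exact hqt)]
      refine integral_undef fun hint => hqt ?_
      -- measurability of the integrand forces `z` to be measurable on `t - S`
      have h1 : AEMeasurable (fun ν => z (t - ν)) (volume.restrict S) := by
        have h2 : AEMeasurable (fun ν => (K ν)⁻¹ * (K ν * z (t - ν))) (volume.restrict S) :=
          (hK.inv.aemeasurable.mul hint.1.aemeasurable).restrict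
        refine h2.congr ?_
        filter_upwards [ae_restrict_mem hS] with ν hν
        have : K ν ≠ 0 := hν
        field_simp
      have hmp : MeasurePreserving (fun x : ℝ => t - x) volume volume :=
        Measure.measurePreserving_sub_left volume t
      have hW : MeasurableSet ((fun x : ℝ => t - x) ⁻¹' S) := hmp.measurable hS
      have h3 : AEMeasurable z (volume.restrict ((fun x : ℝ => t - x) ⁻¹' S)) := by
        have := h1.comp_quasiMeasurePreserving (hmp.restrict_preimage hS).quasiMeasurePreserving
        simpa [Function.comp_def] using this
      have h4 := hVmax _ hW (by
        rw [Measure.restrict_restrict hW]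
        exact h3.mono_measure (Measure.restrict_mono inter_subset_left le_rfl))
      rw [Measure.restrict_apply (hW.diff hV)] at h4
      have h5 : Prod.mk t ⁻¹' D = (fun x : ℝ => t - x) ⁻¹' (((fun x : ℝ => t - x) ⁻¹' S \ V) ∩ J) := by
        ext ν
        simp only [D, mem_preimage, mem_ofPred_eq, mem_inter_iff, mem_sdiff, sub_sub_cancel]
        exact ⟨fun h => ⟨h, hmem t ht ν h.1⟩, fun h => h.1⟩
      show volume (Prod.mk t ⁻¹' D) = 0
      rw [h5, hmp.measure_preimage ((hW.diff hV).inter measurableSet_Icc).nullMeasurableSet, h4]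
  have hconv : AEMeasurable (fun t => ∫ ν, K ν * z1 (t - ν)) volume := by
    have hk1 : AEMeasurable (fun p : ℝ × ℝ => K p.2) (volume.prod volume) :=
      (hK.comp measurable_snd).aemeasurable
    have hf1 : AEMeasurable (fun p : ℝ × ℝ => z1 (p.1 - p.2)) (volume.prod volume) :=
      hz1m.comp_quasiMeasurePreserving (quasiMeasurePreserving_sub_of_right_invariant _ _)
    exact (hk1.mul hf1).aestronglyMeasurable.integral_prod_right'.aemeasurable
  have hshift : AEMeasurable (fun t => z (t - τ)) (volume.restrict (Icc a (a + τ))) := by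
    have hmp : MeasurePreserving (fun x : ℝ => x - τ) volume volume :=
      measurePreserving_sub_right volume τ
    have := hm.comp_quasiMeasurePreserving (hmp.restrict_preimage measurableSet_Icc).quasiMeasurePreserving
    refine AEMeasurable.mono_measure this (Measure.restrict_mono ?_ le_rfl)
    intro t ht
    exact ⟨by linarith [ht.1], by linarith [ht.2]⟩
  have hnew : AEMeasurable z (volume.restrict (Icc a (a + τ))) := by
    have h6 : AEMeasurable (fun t => ξ * z (t - τ) +
        ({t | q t = 0} : Set ℝ).indicator (fun t => ∫ ν, K ν * z1 (t - ν)) t)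
        (volume.restrict (Icc a (a + τ))) :=
      (hshift.const_mul ξ).add ((hconv.indicator (hq (measurableSet_singleton 0))).restrict)
    refine h6.congr ?_
    filter_upwards [ae_restrict_mem measurableSet_Icc] with t ht
    rw [← hI t ht, ← hz t (ha.trans ht.1)]
  have hun : J = Icc (-τ) a ∪ Icc a (a + τ) := (Icc_union_Icc_eq_Icc (by linarith) (by linarith)).symm
  rw [hun, aemeasurable_union_iff]
  exact ⟨hm, hnew⟩

lemma measurable_of_solution {τ ξ : ℝ} (hτ : 0 < τ) {K z : ℝ → ℝ} (hK : Measurable K)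
    (hKs : ∀ ν, ν ∉ Ioc 0 τ → K ν = 0)
    (hz : ∀ t, 0 ≤ t → z t = ξ * z (t - τ) + ∫ ν, K ν * z (t - ν))
    (hm : AEMeasurable z (volume.restrict (Icc (-τ) 0))) :
    AEMeasurable z (volume.restrict (Ici (-τ))) := by
  have h : ∀ n : ℕ, AEMeasurable z (volume.restrict (Icc (-τ) (n * τ))) := by
    intro n
    induction n with
    | zero => simpa using hm
    | succ n ih =>
      have := measurable_step hτ hK hKs hz (by positivity) ih
      convert this using 4
      push_cast; ring
  have hun : Ici (-τ) = ⋃ n : ℕ, Icc (-τ) (n * τ) := by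
    ext t
    simp only [mem_Ici, mem_iUnion, mem_Icc]
    refine ⟨fun ht => ?_, fun ⟨n, hn⟩ => hn.1⟩
    obtain ⟨n, hn⟩ := exists_nat_ge (t / τ)
    exact ⟨n, ht, (div_le_iff₀ hτ).1 hn⟩
  rw [hun]
  exact AEMeasurable.iUnion h

/-- The initial datum is measurable. Nothing is assumed about the measurability of `g`, so `z` is
continuous on the interval of those `θ` for which `g` is integrable on `(-τ, θ]`, and equal to the
constant `z (-τ)` on the rest of `[-τ, 0]`, where the integral is `0` by convention. -/
lemma measurable_initial {τ : ℝ} {z g : ℝ → ℝ} (hτ : 0 < τ)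
    (hz : ∀ θ ∈ Icc (-τ) (0:ℝ), z θ = z (-τ) + ∫ s in (-τ)..θ, g s) :
    AEMeasurable z (volume.restrict (Icc (-τ) 0)) := by
  let I : Set ℝ := {θ | IntegrableOn g (Ioc (-τ) θ)} ∩ Icc (-τ) 0
  have hIord : I.OrdConnected := by
    refine ⟨fun x hx y hy w hw => ⟨?_, hx.2.1.trans hw.1, hw.2.trans hy.2.2⟩⟩
    exact IntegrableOn.mono_set hy.1 (Ioc_subset_Ioc_right hw.2)
  have hImeas : MeasurableSet I := hIord.measurableSet
  have hne : I.Nonempty := ⟨-τ, by simp, by simp [hτ.le]⟩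
  have hbdd : BddAbove I := ⟨0, fun x hx => hx.2.2⟩
  obtain ⟨u, -, hu, huI⟩ := exists_seq_tendsto_sSup hne hbdd
  have hF : ∀ n, AEMeasurable (fun θ => ∫ s in (-τ)..θ, g s) (volume.restrict (Icc (-τ) (u n))) := by
    intro n
    have hc : ContinuousOn (fun θ => ∫ s in (-τ)..θ, g s) (Icc (-τ) (u n)) := by
      have h0 : IntegrableOn g (uIcc (-τ) (u n)) := by
        rw [uIcc_of_le (huI n).2.1, integrableOn_Icc_iff_integrableOn_Ioc]
        exact (huI n).1
      have := intervalIntegral.continuousOn_primitive_interval h0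
      rwa [uIcc_of_le (huI n).2.1] at this
    exact hc.aemeasurable measurableSet_Icc
  have hsub : I ⊆ (⋃ n, Icc (-τ) (u n)) ∪ {sSup I} := by
    intro x hx
    rcases (le_csSup hbdd hx).lt_or_eq with h | h
    · obtain ⟨n, hn⟩ := (hu.eventually (lt_mem_nhds h)).exists
      exact Or.inl (mem_iUnion.2 ⟨n, hx.2.1, hn.le⟩)
    · exact Or.inr h
  have h1 : AEMeasurable (fun θ => ∫ s in (-τ)..θ, g s) (volume.restrict I) := by
    refine AEMeasurable.mono_measure ?_ (Measure.restrict_mono hsub le_rfl)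
    rw [aemeasurable_union_iff]
    refine ⟨AEMeasurable.iUnion hF, ?_⟩
    rw [Measure.restrict_singleton, Real.volume_singleton, zero_smul]
    exact aemeasurable_zero_measure
  have h2 : AEMeasurable (I.indicator (fun θ => ∫ s in (-τ)..θ, g s)) volume :=
    (aemeasurable_indicator_iff hImeas).2 h1
  refine (h2.restrict.const_add (z (-τ))).congr ?_
  filter_upwards [ae_restrict_mem measurableSet_Icc] with θ hθ
  rw [hz θ hθ]
  by_cases hI : θ ∈ I
  · rw [indicator_of_mem hI]
  · rw [indicator_of_notMem hI, intervalIntegral.integral_of_le hθ.1, integral_undef]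
    exact fun h => hI ⟨h, hθ⟩

end

/-! ### The characteristic function on vertical strips -/

section

open MeasureTheory Set FourierTransform Filter Topology

/-- The Laplace transform of a kernel on the line; the kernels used vanish outside `(0, τ]`. -/
noncomputable def lapl (K : ℝ → ℝ) (s : ℂ) : ℂ := ∫ ν : ℝ, (K ν : ℂ) * Complex.exp (-s * ν)

/-- The characteristic function `Δ(s) = 1 - ξ e^{-sτ} - ∫ K(ν) e^{-sν} dν`. -/
noncomputable def charFn (τ ξ : ℝ) (K : ℝ → ℝ) (s : ℂ) : ℂ :=
  1 - ξ * Complex.exp (-s * τ) - lapl K s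

section
variable {τ ξ : ℝ} {K : ℝ → ℝ}

lemma norm_exp_neg_mul_le {ν : ℝ} (hν : ν ∈ Ioc 0 τ) (s : ℂ) :
    ‖Complex.exp (-s * ν)‖ ≤ Real.exp (‖s‖ * τ) := by
  rw [Complex.norm_exp]
  apply Real.exp_le_exp.2
  have h1 : (-s * (ν : ℂ)).re = - s.re * ν := by simp
  rw [h1]
  calc -s.re * ν ≤ ‖s‖ * ν := by
        gcongr
        · exact hν.1.le
        · exact (neg_le_abs _).trans (Complex.abs_re_le_norm s)
    _ ≤ _ := by gcongr; exact hν.2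

lemma norm_kernel_le (hKs : ∀ ν, ν ∉ Ioc 0 τ → K ν = 0) (s : ℂ) (ν : ℝ) :
    ‖(K ν : ℂ) * Complex.exp (-s * ν)‖ ≤ Real.exp (‖s‖ * τ) * ‖K ν‖ := by
  by_cases hν : ν ∈ Ioc 0 τ
  · rw [norm_mul, mul_comm, Complex.norm_real]
    gcongr
    exact norm_exp_neg_mul_le hν s
  · simp [hKs ν hν]

lemma integrable_kernel (hτ : 0 < τ) (hK : Integrable K) (hKs : ∀ ν, ν ∉ Ioc 0 τ → K ν = 0) (s : ℂ) :
    Integrable (fun ν : ℝ => (K ν : ℂ) * Complex.exp (-s * ν)) := by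
  refine (hK.norm.const_mul (Real.exp (‖s‖ * τ))).mono' ?_
    (Eventually.of_forall (norm_kernel_le hKs s))
  exact hK.ofReal.1.mul (Continuous.aestronglyMeasurable (by fun_prop))

/-- The Fourier transform of `K(ν) e^{-γν}` is the Laplace transform of `K` on the line `Re s = γ`. -/
lemma fourier_kernel (γ ω : ℝ) :
    𝓕 (fun ν : ℝ => (K ν : ℂ) * Complex.exp (-(γ : ℂ) * ν)) ω
      = lapl K (γ + 2 * Real.pi * ω * Complex.I) := by
  rw [Real.fourier_real_eq_integral_exp_smul, lapl]
  congr 1; ext ν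
  rw [smul_eq_mul, mul_left_comm, ← Complex.exp_add]
  congr 2
  push_cast; ring

lemma differentiable_lapl (hτ : 0 < τ) (hK : Integrable K) (hKs : ∀ ν, ν ∉ Ioc 0 τ → K ν = 0) :
    Differentiable ℂ (lapl K) := by
  intro s
  have h := hasDerivAt_integral_of_dominated_loc_of_deriv_le (μ := volume) (𝕜 := ℂ)
    (F := fun (s : ℂ) (ν : ℝ) => (K ν : ℂ) * Complex.exp (-s * ν))
    (F' := fun (s : ℂ) (ν : ℝ) => (K ν : ℂ) * (Complex.exp (-s * ν) * -(ν : ℂ)))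
    (x₀ := s) (s := Metric.ball s 1)
    (bound := fun ν => τ * (Real.exp ((‖s‖ + 1) * τ) * ‖K ν‖))
    (Metric.ball_mem_nhds s one_pos)
    (Eventually.of_forall fun s => (integrable_kernel hτ hK hKs s).1)
    (integrable_kernel hτ hK hKs s)
    (hK.ofReal.1.mul (Continuous.aestronglyMeasurable (by fun_prop))) ?_
    ((hK.norm.const_mul _).const_mul _) ?_
  · exact h.2.differentiableAt
  · refine Eventually.of_forall fun ν x hx => ?_
    by_cases hν : ν ∈ Ioc 0 τ
    · have hxs : ‖x‖ ≤ ‖s‖ + 1 := by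
        have : ‖x - s‖ < 1 := by simpa [dist_eq_norm] using hx
        linarith [norm_sub_norm_le x s]
      have h1 := norm_kernel_le hKs x ν
      rw [← mul_assoc, norm_mul, mul_comm]
      have h2 : ‖-(ν : ℂ)‖ ≤ τ := by
        rw [norm_neg, Complex.norm_real, Real.norm_of_nonneg hν.1.le]; exact hν.2
      gcongr
      exact h1.trans (by gcongr)
    · simp [hKs ν hν]
  · refine Eventually.of_forall fun ν x _ => ?_
    have : HasDerivAt (fun s : ℂ => -s * (ν : ℂ)) (-(ν : ℂ)) x := by
      simpa using (hasDerivAt_id x).neg.mul_const (ν : ℂ)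
    exact this.cexp.const_mul _

lemma differentiable_charFn (hτ : 0 < τ) (hK : Integrable K) (hKs : ∀ ν, ν ∉ Ioc 0 τ → K ν = 0) :
    Differentiable ℂ (charFn τ ξ K) := by
  have := differentiable_lapl hτ hK hKs
  unfold charFn
  fun_prop

/-- Modulus of continuity of the Laplace transform in the real part of `s`, uniform in the imaginary
part. -/
lemma lapl_sub_le (hτ : 0 < τ) (hK : Integrable K) (hKs : ∀ ν, ν ∉ Ioc 0 τ → K ν = 0)
    (γ γ' ω : ℝ) :
    ‖lapl K (γ' + ω * Complex.I) - lapl K (γ + ω * Complex.I)‖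
      ≤ (∫ ν, ‖K ν‖) * (Real.exp (|γ| * τ) * (Real.exp (|γ' - γ| * τ) - 1)) := by
  unfold lapl
  rw [← integral_sub (integrable_kernel hτ hK hKs _) (integrable_kernel hτ hK hKs _),
    ← integral_mul_const]
  refine norm_integral_le_of_norm_le (hK.norm.mul_const _) (Eventually.of_forall fun ν => ?_)
  by_cases hν : ν ∈ Ioc 0 τ
  · have h1 : (K ν : ℂ) * Complex.exp (-(γ' + ω * Complex.I) * ν)
        - (K ν : ℂ) * Complex.exp (-(γ + ω * Complex.I) * ν)
        = (K ν : ℂ) * (Complex.exp (-(γ + ω * Complex.I) * ν)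
          * ((Real.exp (-(γ' - γ) * ν) - 1 : ℝ) : ℂ)) := by
      have : Complex.exp (-(γ' + ω * Complex.I) * ν) = Complex.exp (-(γ + ω * Complex.I) * ν)
          * Complex.exp (-(γ' - γ) * ν) := by
        rw [← Complex.exp_add]; congr 1; ring
      rw [this]; push_cast; ring
    rw [h1, norm_mul, norm_mul, Complex.norm_real, Complex.norm_real]
    gcongr
    · rw [Complex.norm_exp]
      apply Real.exp_le_exp.2
      have : (-(γ + ω * Complex.I) * (ν : ℂ)).re = -γ * ν := by simp
      rw [this]
      calc -γ * ν ≤ |γ| * ν := by gcongr; exacts [hν.1.le, neg_le_abs γ]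
        _ ≤ _ := by gcongr; exact hν.2
    · have h2 : |-(γ' - γ) * ν| ≤ |γ' - γ| * τ := by
        rw [abs_mul, abs_neg, abs_of_pos hν.1]; gcongr; exact hν.2
      rw [Real.norm_eq_abs, abs_le]
      have e1 := Real.exp_le_exp.2 ((le_abs_self _).trans h2)
      have e2 := Real.exp_le_exp.2 (neg_le_neg h2)
      have e3 := Real.exp_le_exp.2 ((neg_abs_le (-(γ' - γ) * ν)))
      have e4 : 2 ≤ Real.exp (|γ' - γ| * τ) + Real.exp (-(|γ' - γ| * τ)) := by
        have := Real.add_one_le_exp (|γ' - γ| * τ)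
        have hx := Real.one_le_cosh (|γ' - γ| * τ)
        rw [Real.cosh_eq] at hx
        linarith
      constructor <;> linarith
  · simp only [hKs ν hν]
    simp

/-- The Riemann–Lebesgue lemma, uniformly in a vertical strip: on each vertical line the Laplace transform
tends to `0`, and by `lapl_sub_le` and compactness finitely many lines control the whole strip. -/
lemma lapl_strip_small (hτ : 0 < τ) (hK : Integrable K) (hKs : ∀ ν, ν ∉ Ioc 0 τ → K ν = 0)
    (a b : ℝ) {ε : ℝ} (hε : 0 < ε) :
    ∃ R : ℝ, ∀ γ ∈ Icc a b, ∀ ω : ℝ, R ≤ |ω| → ‖lapl K (γ + ω * Complex.I)‖ ≤ ε := by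
  refine (isCompact_Icc (a := a) (b := b)).induction_on
    (p := fun S => ∃ R : ℝ, ∀ γ ∈ S, ∀ ω : ℝ, R ≤ |ω| → ‖lapl K (γ + ω * Complex.I)‖ ≤ ε)
    ⟨0, by simp⟩ ?_ ?_ ?_
  · rintro s t hst ⟨R, hR⟩
    exact ⟨R, fun γ hγ => hR γ (hst hγ)⟩
  · rintro s t ⟨R, hR⟩ ⟨R', hR'⟩
    refine ⟨max R R', fun γ hγ ω hω => ?_⟩
    rcases hγ with h | h
    · exact hR γ h ω ((le_max_left _ _).trans hω)
    · exact hR' γ h ω ((le_max_right _ _).trans hω)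
  · intro γ _
    have hcont : Tendsto (fun γ' : ℝ => (∫ ν, ‖K ν‖) * (Real.exp (|γ| * τ)
        * (Real.exp (|γ' - γ| * τ) - 1))) (𝓝 γ) (𝓝 0) := by
      have : Continuous (fun γ' : ℝ => (∫ ν, ‖K ν‖) * (Real.exp (|γ| * τ)
        * (Real.exp (|γ' - γ| * τ) - 1))) := by fun_prop
      simpa using this.tendsto γ
    have hU := hcont.eventually (gt_mem_nhds (half_pos hε))
    refine ⟨_, mem_nhdsWithin_of_mem_nhds hU, ?_⟩
    have hRL := Real.zero_at_infty_fourier (fun ν : ℝ => (K ν : ℂ) * Complex.exp (-(γ : ℂ) * ν))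
    have hmem := hRL (Metric.ball_mem_nhds 0 (half_pos hε))
    obtain ⟨r, hr⟩ := Metric.closedBall_compl_subset_of_mem_cocompact hmem 0
    refine ⟨2 * Real.pi * (|r| + 1), fun γ' hγ' ω hω => ?_⟩
    have h1 := hr (a := ω / (2 * Real.pi)) (by
      simp only [mem_compl_iff, Metric.mem_closedBall, dist_zero_right, not_le, Real.norm_eq_abs,
        abs_div]
      rw [abs_of_pos (by positivity : 0 < 2 * Real.pi), lt_div_iff₀ (by positivity)]
      have := le_abs_self r
      nlinarith [Real.pi_pos])
    rw [mem_preimage, mem_ball_zero_iff, fourier_kernel] at h1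
    have h2 : (γ + 2 * Real.pi * (ω / (2 * Real.pi) : ℝ) * Complex.I : ℂ) = γ + ω * Complex.I := by
      have : (Real.pi : ℂ) ≠ 0 := by exact_mod_cast Real.pi_ne_zero
      push_cast; field_simp
    rw [h2] at h1
    have h3 := lapl_sub_le hτ hK hKs γ γ' ω
    have h4 := norm_sub_norm_le (lapl K (γ' + ω * Complex.I)) (lapl K (γ + ω * Complex.I))
    have h5 : _ < ε / 2 := hγ'
    linarith

lemma lapl_strip_small' (hτ : 0 < τ) (hK : Integrable K) (hKs : ∀ ν, ν ∉ Ioc 0 τ → K ν = 0)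
    (a b : ℝ) {ε : ℝ} (hε : 0 < ε) :
    ∃ R : ℝ, ∀ s : ℂ, s.re ∈ Icc a b → R ≤ |s.im| → ‖lapl K s‖ ≤ ε := by
  obtain ⟨R, hR⟩ := lapl_strip_small hτ hK hKs a b hε
  refine ⟨R, fun s h1 h2 => ?_⟩
  have := hR s.re h1 s.im h2
  rwa [Complex.re_add_im] at this

/-- If all roots of the characteristic function satisfy `Re s ≤ -η` with `η > 0`, then `|ξ| < 1`.
Otherwise `1 - ξ e^{-sτ}` has zeros `c` with `Re c ≥ 0` and arbitrarily large imaginary part. Around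
such a `c` the characteristic function is a small perturbation of `1 - e^{-(s-c)τ}`, and the
quantitative open mapping theorem gives it a zero within distance `η / 2` of `c`. -/
lemma abs_lt_one_of_gap (hτ : 0 < τ) (hK : Integrable K) (hKs : ∀ ν, ν ∉ Ioc 0 τ → K ν = 0)
    {η : ℝ} (hη : 0 < η) (hroot : ∀ s, charFn τ ξ K s = 0 → s.re ≤ -η) : |ξ| < 1 := by
  by_contra! hξ
  have hξ0 : (ξ : ℂ) ≠ 0 := by
    intro h
    have : ξ = 0 := by exact_mod_cast h
    rw [this] at hξ; norm_num at hξ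
  have hτc : (τ : ℂ) ≠ 0 := by exact_mod_cast hτ.ne'
  set s0 : ℂ := Complex.log ξ / τ with hs0
  have hre0 : 0 ≤ s0.re := by
    rw [hs0, Complex.div_ofReal_re, Complex.log_re, Complex.norm_real]
    exact div_nonneg (Real.log_nonneg hξ) hτ.le
  -- `r ≤ η / 2` keeps the ball around `c` in the region `Re s > -η`; `r τ ≤ 1 / 2` makes
  -- `|1 - e^{-(s-c)τ}| ≥ r τ / 2` on its boundary
  set r : ℝ := min (η / 2) (1 / (2 * τ)) with hr
  have hr0 : 0 < r := by positivity
  set ρ : ℝ := r * τ with hρ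
  have hρ0 : 0 < ρ := by positivity
  have hρ1 : ρ ≤ 1 / 2 := by
    calc ρ ≤ 1 / (2 * τ) * τ := by rw [hρ]; gcongr; exact min_le_right _ _
      _ = 1 / 2 := by field_simp
  obtain ⟨R, hR⟩ := lapl_strip_small' hτ hK hKs (s0.re - r) (s0.re + r) (ε := ρ / 16) (by positivity)
  obtain ⟨n, hn⟩ := exists_nat_ge ((|R| + |s0.im| + r) * τ / (2 * Real.pi))
  set c : ℂ := s0 + 2 * Real.pi * n / τ * Complex.I with hc
  have hcre : c.re = s0.re := by
    have : (2 * Real.pi * n / τ * Complex.I : ℂ) = ((2 * Real.pi * n / τ : ℝ) : ℂ) * Complex.I := by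
      push_cast; ring
    rw [hc, this]; simp
  have hcim : c.im = s0.im + 2 * Real.pi * n / τ := by
    have : (2 * Real.pi * n / τ * Complex.I : ℂ) = ((2 * Real.pi * n / τ : ℝ) : ℂ) * Complex.I := by
      push_cast; ring
    rw [hc, this]; simp
  have hbig : |R| + |s0.im| + r ≤ 2 * Real.pi * n / τ := by
    rw [div_le_iff₀ (by positivity)] at hn
    rw [le_div_iff₀ hτ]; linarith
  have hclose : ∀ s ∈ Metric.closedBall c r, ‖lapl K s‖ ≤ ρ / 16 := by
    intro s hs
    have h1 : ‖s - c‖ ≤ r := by simpa [dist_eq_norm] using hs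
    have h2 := abs_le.1 ((Complex.abs_re_le_norm (s - c)).trans h1)
    have h3 := abs_le.1 ((Complex.abs_im_le_norm (s - c)).trans h1)
    rw [Complex.sub_re, hcre] at h2
    rw [Complex.sub_im, hcim] at h3
    refine hR s ⟨by linarith [h2.1], by linarith [h2.2]⟩ ?_
    have := neg_abs_le s0.im
    have := le_abs_self R
    exact le_trans (by linarith [h3.1]) (le_abs_self s.im)
  have hexp : ∀ s : ℂ, (ξ : ℂ) * Complex.exp (-s * τ) = Complex.exp (-(s - c) * τ) := by
    intro s
    have h1 : -(s - c) * τ = Complex.log ξ + (-s * τ) + n * (2 * Real.pi * Complex.I) := by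
      rw [hc, hs0]; field_simp; ring
    rw [h1, Complex.exp_add, Complex.exp_add, Complex.exp_log hξ0, Complex.exp_nat_mul_two_pi_mul_I]
    ring
  have hval : ∀ s, charFn τ ξ K s = 1 - Complex.exp (-(s - c) * τ) - lapl K s := by
    intro s; rw [charFn, hexp]
  have hcc : ‖charFn τ ξ K c‖ ≤ ρ / 16 := by
    rw [hval]
    simpa using hclose c (Metric.mem_closedBall_self hr0.le)
  have hsph : ∀ s ∈ Metric.sphere c r, 3 * ρ / 8 ≤ ‖charFn τ ξ K s - charFn τ ξ K c‖ := by
    intro s hs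
    have h1 : ‖s - c‖ = r := by simpa [dist_eq_norm] using hs
    have hx : ‖-(s - c) * (τ : ℂ)‖ = ρ := by
      rw [norm_mul, norm_neg, h1, Complex.norm_real, Real.norm_of_nonneg hτ.le]
    have h2 := Complex.norm_exp_sub_one_sub_id_le (x := -(s - c) * (τ : ℂ)) (by rw [hx]; linarith)
    rw [hx] at h2
    have h3 : ρ / 2 ≤ ‖1 - Complex.exp (-(s - c) * τ)‖ := by
      have h4 : -(s - c) * (τ : ℂ) = -(1 - Complex.exp (-(s - c) * τ))
          - (Complex.exp (-(s - c) * τ) - 1 - (-(s - c) * (τ : ℂ))) := by ring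
      have h5 : ρ ≤ ‖1 - Complex.exp (-(s - c) * τ)‖ + ρ ^ 2 := by
        calc ρ = ‖-(s - c) * (τ : ℂ)‖ := hx.symm
          _ ≤ ‖-(1 - Complex.exp (-(s - c) * τ))‖
              + ‖Complex.exp (-(s - c) * τ) - 1 - (-(s - c) * (τ : ℂ))‖ := by
              conv_lhs => rw [h4]
              exact norm_sub_le _ _
          _ ≤ _ := by rw [norm_neg]; gcongr
      nlinarith
    have h6 := hclose s (Metric.sphere_subset_closedBall hs)
    have h7 : 1 - Complex.exp (-(s - c) * τ)
        = (charFn τ ξ K s - charFn τ ξ K c) + (lapl K s + charFn τ ξ K c) := by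
      rw [hval s]; ring
    have h8 := norm_add_le (charFn τ ξ K s - charFn τ ξ K c) (lapl K s + charFn τ ξ K c)
    rw [← h7] at h8
    have h9 := norm_add_le (lapl K s) (charFn τ ξ K c)
    linarith
  have hdiff := differentiable_charFn (ξ := ξ) hτ hK hKs
  have hne : ∃ᶠ s in 𝓝 c, charFn τ ξ K s ≠ charFn τ ξ K c := by
    intro hev
    have hev' : charFn τ ξ K =ᶠ[𝓝 c] fun _ => charFn τ ξ K c := by
      filter_upwards [hev] with s hs using not_not.1 hs
    have heq := AnalyticOnNhd.eq_of_eventuallyEq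
      (fun s _ => hdiff.analyticAt s) analyticOnNhd_const hev'
    have hmem : c + r ∈ Metric.sphere c r := by
      simp [hr0.le]
    have := hsph _ hmem
    rw [heq] at this
    simp at this
    linarith
  have hball := hdiff.diffContOnCl.ball_subset_image_closedBall hr0 hsph hne
  obtain ⟨s, hs, hs0'⟩ := hball (show (0 : ℂ) ∈ _ by
    rw [Metric.mem_ball, dist_zero_left]; linarith)
  have h1 : ‖s - c‖ ≤ r := by simpa [dist_eq_norm] using hs
  have h2 := abs_le.1 ((Complex.abs_re_le_norm (s - c)).trans h1)
  rw [Complex.sub_re, hcre] at h2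
  have h3 := hroot s hs0'
  have h4 : r ≤ η / 2 := min_le_left _ _
  linarith [h2.1]

/-- On the strip `-η' ≤ Re s ≤ b`, which contains no root, the characteristic function is bounded away
from `0`: far from the real axis because `|ξ| e^{η'τ} < 1` and the Laplace transform is small there, and
on the remaining compact rectangle by continuity. -/
lemma charFn_lower_bound (hτ : 0 < τ) (hK : Integrable K) (hKs : ∀ ν, ν ∉ Ioc 0 τ → K ν = 0)
    {η : ℝ} (hroot : ∀ s, charFn τ ξ K s = 0 → s.re ≤ -η) {η' : ℝ} (hη' : η' < η)
    (hξ : |ξ| * Real.exp (η' * τ) < 1) (b : ℝ) :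
    ∃ δ : ℝ, 0 < δ ∧ ∀ s : ℂ, s.re ∈ Icc (-η') b → δ ≤ ‖charFn τ ξ K s‖ := by
  set ε : ℝ := (1 - |ξ| * Real.exp (η' * τ)) / 2 with hε
  have hε0 : 0 < ε := by rw [hε]; linarith
  obtain ⟨R, hR⟩ := lapl_strip_small' hτ hK hKs (-η') b hε0
  have hcomp : IsCompact (Icc (-η') b ×ℂ Icc (-R) R) := isCompact_Icc.reProdIm isCompact_Icc
  have hfar : ∀ s : ℂ, s.re ∈ Icc (-η') b → R ≤ |s.im| → ε ≤ ‖charFn τ ξ K s‖ := by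
    intro s h1 h2
    have h3 := hR s h1 h2
    have h4 : ‖(ξ : ℂ) * Complex.exp (-s * τ)‖ ≤ |ξ| * Real.exp (η' * τ) := by
      rw [norm_mul, Complex.norm_real, Real.norm_eq_abs, Complex.norm_exp]
      gcongr
      have : (-s * (τ : ℂ)).re = -s.re * τ := by simp
      rw [this]; gcongr; linarith [h1.1]
    have h5 : (1 : ℂ) = charFn τ ξ K s + (ξ * Complex.exp (-s * τ) + lapl K s) := by
      rw [charFn]; ring
    have h6 := norm_add_le (charFn τ ξ K s) (ξ * Complex.exp (-s * τ) + lapl K s)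
    rw [← h5, norm_one] at h6
    have h7 := norm_add_le (ξ * Complex.exp (-s * τ)) (lapl K s)
    linarith
  rcases (Icc (-η') b ×ℂ Icc (-R) R).eq_empty_or_nonempty with hemp | hne
  · refine ⟨ε, hε0, fun s hs => hfar s hs ?_⟩
    by_contra! h
    have : s ∈ Icc (-η') b ×ℂ Icc (-R) R := ⟨hs, (abs_lt.1 h).1.le, (abs_lt.1 h).2.le⟩
    rw [hemp] at this; exact this
  · obtain ⟨s0, hs0, hmin⟩ := hcomp.exists_isMinOn hne
      ((differentiable_charFn (ξ := ξ) hτ hK hKs).continuous.norm.continuousOn)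
    have hpos : 0 < ‖charFn τ ξ K s0‖ := by
      rw [norm_pos_iff]
      intro h
      have := hroot s0 h
      have h2 := hs0.1.1
      linarith
    refine ⟨min ε ‖charFn τ ξ K s0‖, lt_min hε0 hpos, fun s hs => ?_⟩
    by_cases h : R ≤ |s.im|
    · exact (min_le_left _ _).trans (hfar s hs h)
    · push Not at h
      refine (min_le_right _ _).trans (hmin ?_)
      exact ⟨hs, (abs_lt.1 h).1.le, (abs_lt.1 h).2.le⟩

end

end

/-! ### Weighted spaces and causal solutions -/

section

open MeasureTheory Set FourierTransform Filter Topology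
open scoped ENNReal Convolution

/-- Fatou in `L²` for a sequence that is pointwise eventually equal to its limit. -/
lemma eLpNorm_le_of_eventually_eq {f : ℕ → ℝ → ℝ≥0∞} {u : ℝ → ℝ≥0∞} (hf : ∀ n, AEMeasurable (f n))
    (hfu : ∀ t, ∀ᶠ n in atTop, f n t = u t) {C : ℝ≥0∞} (hC : ∀ n, eLpNorm (f n) 2 volume ≤ C) :
    eLpNorm u 2 volume ≤ C := by
  rw [← (ENNReal.pow_right_strictMono (n := 2) (by norm_num)).le_iff_le]
  show _ ^ 2 ≤ _ ^ 2
  rw [eLpNorm_two_sq]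
  calc ∫⁻ t, u t ^ 2 = ∫⁻ t, liminf (fun n => f n t ^ 2) atTop := by
        refine lintegral_congr fun t => ?_
        refine (Tendsto.liminf_eq (tendsto_const_nhds.congr' ?_)).symm
        filter_upwards [hfu t] with n hn
        rw [hn]
    _ ≤ liminf (fun n => ∫⁻ t, f n t ^ 2) atTop :=
        lintegral_liminf_le' fun n => (hf n).pow_const 2
    _ ≤ C ^ 2 := by
        refine liminf_le_of_le (by isBoundedDefault) fun b hb => ?_
        obtain ⟨n, hn⟩ := hb.exists
        refine hn.trans ?_
        rw [← eLpNorm_two_sq]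
        exact pow_le_pow_left' (hC n) 2

section
variable {τ ξ : ℝ} {K : ℝ → ℝ} {Z : ℝ → ℂ}

/-- The coefficient `ξ e^{-γτ}` of the delay operator conjugated by the weight `e^{-γt}`. -/
noncomputable def wCoef (τ ξ γ : ℝ) : ℂ := ξ * Complex.exp (-(γ : ℂ) * τ)

/-- The kernel `K(ν) e^{-γν}` of the delay operator conjugated by the weight `e^{-γt}`. -/
noncomputable def wKer (K : ℝ → ℝ) (γ : ℝ) (ν : ℝ) : ℂ := (K ν : ℂ) * Complex.exp (-(γ : ℂ) * ν)

/-- The quantity `|ξ| e^{-γτ} + ∫ |K(ν)| e^{-γν} dν`, which bounds the `L²` operator norm of the delay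
operator conjugated by the weight `e^{-γt}`. -/
noncomputable def wMass (τ ξ : ℝ) (K : ℝ → ℝ) (γ : ℝ) : ℝ≥0∞ :=
  ‖wCoef τ ξ γ‖ₑ + ∫⁻ ν, ‖wKer K γ ν‖ₑ

lemma integrable_wKer (hτ : 0 < τ) (hK : Integrable K) (hKs : ∀ ν, ν ∉ Ioc 0 τ → K ν = 0) (γ : ℝ) :
    Integrable (wKer K γ) := integrable_kernel hτ hK hKs (γ : ℂ)

lemma wKer_zero (hKs : ∀ ν, ν ∉ Ioc 0 τ → K ν = 0) {γ ν : ℝ} (hν : ν ∉ Ioc 0 τ) :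
    wKer K γ ν = 0 := by simp [wKer, hKs ν hν]

lemma enorm_ofReal_exp (x : ℝ) : ‖((Real.exp x : ℝ) : ℂ)‖ₑ = ENNReal.ofReal (Real.exp x) := by
  rw [← ofReal_norm, Complex.norm_real, Real.norm_of_nonneg (Real.exp_pos _).le]

lemma wMass_zero : wMass τ ξ K 0 = ‖(ξ : ℂ)‖ₑ + ∫⁻ ν, ‖(K ν : ℂ)‖ₑ := by
  simp [wMass, wCoef, wKer]

lemma wMass_lt_top (hτ : 0 < τ) (hK : Integrable K) (hKs : ∀ ν, ν ∉ Ioc 0 τ → K ν = 0) (γ : ℝ) :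
    wMass τ ξ K γ < ⊤ := by
  unfold wMass
  exact ENNReal.add_lt_top.2 ⟨enorm_lt_top, (integrable_wKer hτ hK hKs γ).2⟩

lemma wMass_le (hτ : 0 < τ) (hKs : ∀ ν, ν ∉ Ioc 0 τ → K ν = 0) {γ b : ℝ} (hb : 0 ≤ b) (hγ : -b ≤ γ) :
    wMass τ ξ K γ ≤ ENNReal.ofReal (Real.exp (b * τ)) * wMass τ ξ K 0 := by
  have hexp : ∀ ν ∈ Icc 0 τ, ‖Complex.exp (-(γ : ℂ) * ν)‖ₑ ≤ ENNReal.ofReal (Real.exp (b * τ)) := by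
    intro ν hν
    rw [← ofReal_norm]
    apply ENNReal.ofReal_le_ofReal
    rw [Complex.norm_exp]
    apply Real.exp_le_exp.2
    have : (-(γ : ℂ) * (ν : ℂ)).re = -γ * ν := by simp
    rw [this]
    calc -γ * ν ≤ b * ν := by gcongr; exacts [hν.1, by linarith]
      _ ≤ _ := by gcongr; exact hν.2
  rw [wMass_zero, wMass, mul_add, ← lintegral_const_mul' _ _ ENNReal.ofReal_ne_top]
  gcongr with ν
  · rw [wCoef, enorm_mul, mul_comm]
    gcongr
    exact hexp τ ⟨hτ.le, le_rfl⟩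
  · by_cases hν : ν ∈ Ioc 0 τ
    · rw [wKer, enorm_mul, mul_comm]
      gcongr
      exact hexp ν ⟨hν.1.le, hν.2⟩
    · simp [wKer, hKs ν hν]

/-- A solution of the equation with kernel `K` as a function on the whole line: `Z` is measurable,
vanishes before `-τ`, satisfies the equation for `t ≥ 0`, and is square integrable on every half-line
`(-∞, T]`. -/
structure IsCausalSol (τ ξ : ℝ) (K : ℝ → ℝ) (Z : ℝ → ℂ) : Prop where
  meas : AEMeasurable Z
  supp : ∀ t < -τ, Z t = 0
  eqn : ∀ t, 0 ≤ t → Z t = delayOp τ ξ (fun ν => (K ν : ℂ)) Z t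
  loc : ∀ T, eLpNorm ((Iic T).indicator Z) 2 volume < ⊤

/-- The `L²` norm of `Z` on the negative half-line, which for a causal solution is that of its initial
datum. -/
noncomputable def initNorm (Z : ℝ → ℂ) : ℝ≥0∞ := eLpNorm ((Iio 0).indicator Z) 2 volume

lemma exp_mul_delayMaj (γ t : ℝ) :
    ENNReal.ofReal (Real.exp (-γ * t)) *
      delayMaj τ ‖(ξ : ℂ)‖ₑ (fun ν => ‖(K ν : ℂ)‖ₑ) (fun x => ‖Z x‖ₑ) t =
    delayMaj τ ‖wCoef τ ξ γ‖ₑ (fun ν => ‖wKer K γ ν‖ₑ)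
      (fun x => ENNReal.ofReal (Real.exp (-γ * x)) * ‖Z x‖ₑ) t := by
  have hsplit : ∀ ν : ℝ, ENNReal.ofReal (Real.exp (-γ * t)) =
      ‖Complex.exp (-(γ : ℂ) * ν)‖ₑ * ENNReal.ofReal (Real.exp (-γ * (t - ν))) := by
    intro ν
    have : Complex.exp (-(γ : ℂ) * ν) = ((Real.exp (-γ * ν) : ℝ) : ℂ) := by push_cast; rfl
    rw [this, enorm_ofReal_exp, ← ENNReal.ofReal_mul (Real.exp_pos _).le, ← Real.exp_add]
    congr 2; ring
  unfold delayMaj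
  rw [mul_add, ← lintegral_const_mul' _ _ ENNReal.ofReal_ne_top]
  congr 1
  · rw [hsplit τ, wCoef, enorm_mul]; ring
  · refine lintegral_congr fun ν => ?_
    simp only [wKer, enorm_mul]
    rw [hsplit ν]; ring

/-- Crude growth bound: if `wMass` at `γ` is at most `1/2`, then `e^{-γt} Z ∈ L²`. With `v` the weighted
solution cut off after time `T`, causality of the delay gives `‖v‖ ≤ ‖G‖ + ‖v‖ / 2`, where `G` is the
weighted initial datum; then `T → ∞`. -/
lemma growth_bound (hτ : 0 < τ) (hK : Integrable K) (hKs : ∀ ν, ν ∉ Ioc 0 τ → K ν = 0)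
    (hZ : IsCausalSol τ ξ K Z) {γ : ℝ} (hγ : 0 ≤ γ) (hM : wMass τ ξ K γ ≤ ENNReal.ofReal (1 / 2)) :
    eLpNorm (fun t => ((Real.exp (-γ * t) : ℝ) : ℂ) * Z t) 2 volume < ⊤ := by
  set u : ℝ → ℝ≥0∞ := fun t => ENNReal.ofReal (Real.exp (-γ * t)) * ‖Z t‖ₑ with hu
  have hum : AEMeasurable u := by
    refine AEMeasurable.mul (Measurable.aemeasurable (by fun_prop)) hZ.meas.enorm
  have huZ : eLpNorm (fun t => ((Real.exp (-γ * t) : ℝ) : ℂ) * Z t) 2 volume = eLpNorm u 2 volume := by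
    rw [← eLpNorm_enorm]
    congr 1; ext t
    rw [enorm_mul, enorm_ofReal_exp]
  rw [huZ]
  -- on `[-τ, ∞)` the weight is at most `e^{γτ}`
  have hfin : ∀ T, eLpNorm ((Iic T).indicator u) 2 volume < ⊤ := by
    intro T
    have hle : ∀ t, ‖(Iic T).indicator u t‖ₑ ≤ ‖((Real.exp (γ * τ) : ℝ) : ℂ) * (Iic T).indicator Z t‖ₑ := by
      intro t
      by_cases hT : t ∈ Iic T
      · rw [indicator_of_mem hT, indicator_of_mem hT, enorm_mul, enorm_ofReal_exp, hu]
        by_cases ht : t < -τ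
        · simp [hZ.supp t ht]
        · simp only [enorm_eq_self]
          push Not at ht
          exact mul_le_mul' (ENNReal.ofReal_le_ofReal (Real.exp_le_exp.2 (by nlinarith))) le_rfl
      · simp [indicator_of_notMem hT]
    refine (eLpNorm_mono_enorm hle).trans_lt ?_
    have : MemLp ((Iic T).indicator Z) 2 :=
      ⟨(hZ.meas.indicator measurableSet_Iic).aestronglyMeasurable, hZ.loc T⟩
    exact (this.const_mul _).2
  set G : ℝ → ℝ≥0∞ := (Iio 0).indicator u with hG
  have hGm : AEMeasurable G := hum.indicator measurableSet_Iio
  have hGfin : eLpNorm G 2 volume < ⊤ := by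
    refine (eLpNorm_mono_enorm fun t => ?_).trans_lt (hfin 0)
    simp only [enorm_eq_self, hG]
    exact indicator_le_indicator_of_subset (Iio_subset_Iic_self : Iio (0 : ℝ) ⊆ Iic 0)
      (fun _ => zero_le) t
  have key : ∀ T, eLpNorm ((Iic T).indicator u) 2 volume ≤ 2 * eLpNorm G 2 volume := by
    intro T
    set v := (Iic T).indicator u with hv
    have hvm : AEMeasurable v := hum.indicator measurableSet_Iic
    have hpt : ∀ t, v t ≤ G t + delayMaj τ ‖wCoef τ ξ γ‖ₑ (fun ν => ‖wKer K γ ν‖ₑ) v t := by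
      intro t
      by_cases hT : t ∈ Iic T
      · by_cases ht : t < 0
        · rw [hv, hG, indicator_of_mem hT, indicator_of_mem (by exact ht)]
          exact le_self_add
        · push Not at ht
          refine le_trans ?_ le_add_self
          rw [hv, indicator_of_mem hT]
          have h1 : u t ≤ delayMaj τ ‖wCoef τ ξ γ‖ₑ (fun ν => ‖wKer K γ ν‖ₑ) u t := by
            rw [hu, ← exp_mul_delayMaj]
            simp only
            gcongr
            conv_lhs => rw [hZ.eqn t ht]
            exact enorm_delayOp_le _ _ _ _ _
          refine h1.trans ?_
          unfold delayMaj
          gcongr ?_ + ?_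
          · rw [indicator_of_mem (show t - τ ∈ Iic T by
              simp only [mem_Iic] at hT ⊢; linarith)]
          · refine lintegral_mono fun ν => ?_
            by_cases hν : ν ∈ Ioc 0 τ
            · simp only
              rw [indicator_of_mem (show t - ν ∈ Iic T by
                simp only [mem_Iic] at hT ⊢; linarith [hν.1])]
            · simp [wKer_zero hKs hν]
      · rw [hv, indicator_of_notMem hT]; exact zero_le
    have hker : AEMeasurable (fun ν => ‖wKer K γ ν‖ₑ) :=
      (integrable_wKer hτ hK hKs γ).1.aemeasurable.enorm
    have h2 : eLpNorm v 2 volume ≤ eLpNorm G 2 volume + ENNReal.ofReal (1 / 2) * eLpNorm v 2 volume := by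
      calc eLpNorm v 2 volume ≤ eLpNorm (G + delayMaj τ ‖wCoef τ ξ γ‖ₑ (fun ν => ‖wKer K γ ν‖ₑ) v) 2 volume :=
            eLpNorm_mono_enorm fun t => by simpa using hpt t
        _ ≤ eLpNorm G 2 volume
            + eLpNorm (delayMaj τ ‖wCoef τ ξ γ‖ₑ (fun ν => ‖wKer K γ ν‖ₑ) v) 2 volume := by
            refine eLpNorm_add_le hGm.aestronglyMeasurable ?_ (by norm_num)
            exact (aemeasurable_delayMaj τ hker hvm).aestronglyMeasurable
        _ ≤ _ := by
            gcongr
            refine (eLpNorm_delayMaj_le τ hker hvm).trans ?_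
            gcongr
            exact hM
    have hvfin : eLpNorm v 2 volume ≠ ⊤ := (hfin T).ne
    lift eLpNorm v 2 volume to NNReal using hvfin with a
    lift eLpNorm G 2 volume to NNReal using hGfin.ne with b
    rw [ENNReal.ofReal] at h2
    norm_cast at h2 ⊢
    rw [← NNReal.coe_le_coe] at h2 ⊢
    push_cast at h2 ⊢
    rw [Real.coe_toNNReal _ (by norm_num)] at h2
    linarith
  refine lt_of_le_of_lt (eLpNorm_le_of_eventually_eq (f := fun n : ℕ => (Iic (n : ℝ)).indicator u)
    (fun n => hum.indicator measurableSet_Iic) ?_ (fun n => key n)) (ENNReal.mul_lt_top (by norm_num) hGfin)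
  intro t
  obtain ⟨n, hn⟩ := exists_nat_ge t
  filter_upwards [eventually_ge_atTop n] with m hm
  rw [indicator_of_mem]
  exact hn.trans (by exact_mod_cast hm)

/-- For `t < 0` the weighted defect `Z - delayOp Z` is controlled by the initial datum alone, uniformly
for `|γ| ≤ b`. The defect vanishes before `-τ`, so the weight matters on `[-τ, 0)` only. -/
lemma defect_bound (hKs : ∀ ν, ν ∉ Ioc 0 τ → K ν = 0)
    (hZ : IsCausalSol τ ξ K Z) (hτ : 0 < τ) {b γ : ℝ} (hγ : |γ| ≤ b) (t : ℝ) (ht : t < 0) :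
    ENNReal.ofReal (Real.exp (-γ * t)) * ‖Z t - delayOp τ ξ (fun ν => (K ν : ℂ)) Z t‖ₑ ≤
      ENNReal.ofReal (Real.exp (b * τ)) * (‖(Iio 0).indicator Z t‖ₑ +
        delayMaj τ ‖(ξ : ℂ)‖ₑ (fun ν => ‖(K ν : ℂ)‖ₑ) (fun x => ‖(Iio 0).indicator Z x‖ₑ) t) := by
  by_cases hτt : t < -τ
  · have h1 : delayOp τ ξ (fun ν => (K ν : ℂ)) Z t = 0 := by
      unfold delayOp
      rw [hZ.supp (t - τ) (by linarith), mul_zero, zero_add]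
      refine integral_eq_zero_of_ae (Eventually.of_forall fun ν => ?_)
      by_cases hν : ν ∈ Ioc 0 τ
      · simp [hZ.supp (t - ν) (by linarith [hν.1])]
      · simp [hKs ν hν]
    simp [h1, hZ.supp t hτt]
  · push Not at hτt
    refine mul_le_mul' (ENNReal.ofReal_le_ofReal (Real.exp_le_exp.2 ?_)) ?_
    · have h1 := le_abs_self γ
      have h2 : |γ| * (-t) ≤ b * τ :=
        mul_le_mul hγ (by linarith) (by linarith) ((abs_nonneg γ).trans hγ)
      nlinarith
    · refine (enorm_sub_le).trans ?_
      rw [indicator_of_mem (show t ∈ Iio 0 from ht)]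
      gcongr
      refine (enorm_delayOp_le _ _ _ _ _).trans ?_
      unfold delayMaj
      gcongr ?_ + ?_
      · beta_reduce
        rw [indicator_of_mem (show t - τ ∈ Iio 0 by simp only [mem_Iio]; linarith)]
      · refine lintegral_mono fun ν => ?_
        by_cases hν : ν ∈ Ioc 0 τ
        · simp only
          rw [indicator_of_mem (show t - ν ∈ Iio 0 by simp only [mem_Iio]; linarith [hν.1])]
        · simp [hKs ν hν]

end

end

/-! ### Shifting the exponential weight -/

section

open MeasureTheory Set FourierTransform Filter Topology
open scoped ENNReal Convolution

section
variable {τ ξ : ℝ} {K : ℝ → ℝ} {Z : ℝ → ℂ}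

/-- Increasing the exponent of the weight by any `h > 0` turns square integrability into membership in
`L¹ ∩ L²`, for functions supported in `[-τ, ∞)`. -/
lemma weighted_integrable (hZm : AEMeasurable Z) (hZs : ∀ t < -τ, Z t = 0) {γ h : ℝ} (hh : 0 < h)
    (hL : eLpNorm (fun t => ((Real.exp (-γ * t) : ℝ) : ℂ) * Z t) 2 volume < ⊤) :
    Integrable (fun t => ((Real.exp (-(γ + h) * t) : ℝ) : ℂ) * Z t) ∧
      MemLp (fun t => ((Real.exp (-(γ + h) * t) : ℝ) : ℂ) * Z t) 2 := by
  have hmeas : ∀ γ : ℝ, AEStronglyMeasurable (fun t => ((Real.exp (-γ * t) : ℝ) : ℂ) * Z t) volume := by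
    intro γ
    refine AEMeasurable.aestronglyMeasurable (AEMeasurable.mul (Measurable.aemeasurable ?_) hZm)
    fun_prop
  have hf : MemLp (fun t => ((Real.exp (-γ * t) : ℝ) : ℂ) * Z t) 2 := ⟨hmeas γ, hL⟩
  constructor
  · have hφ : MemLp ((Ici (-τ)).indicator fun t => ((Real.exp (-h * t) : ℝ) : ℂ)) 2 := by
      rw [memLp_indicator_iff_restrict measurableSet_Ici,
        memLp_two_iff_integrable_sq_norm (Continuous.aestronglyMeasurable (by fun_prop))]
      have h1 : IntegrableOn (fun t => Real.exp (-(2 * h) * t)) (Ici (-τ)) := by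
        rw [integrableOn_Ici_iff_integrableOn_Ioi]
        exact integrableOn_exp_mul_Ioi (by linarith) _
      refine h1.congr (Eventually.of_forall fun t => ?_)
      simp only
      rw [Complex.norm_real, Real.norm_of_nonneg (Real.exp_pos _).le, ← Real.exp_nat_mul]
      congr 1; push_cast; ring
    refine (hφ.integrable_mul hf).congr (Eventually.of_forall fun t => ?_)
    by_cases ht : t ∈ Ici (-τ)
    · simp only [Pi.mul_apply, indicator_of_mem ht]
      rw [← mul_assoc, ← Complex.ofReal_mul, ← Real.exp_add]
      congr 3; ring
    · simp only [mem_Ici, not_le] at ht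
      simp [hZs t ht]
  · refine hf.of_le_mul (c := Real.exp (h * τ)) (hmeas _) (Eventually.of_forall fun t => ?_)
    by_cases ht : t < -τ
    · simp [hZs t ht]
    · push Not at ht
      rw [norm_mul, norm_mul, ← mul_assoc, Complex.norm_real, Complex.norm_real,
        Real.norm_of_nonneg (Real.exp_pos _).le, Real.norm_of_nonneg (Real.exp_pos _).le,
        ← Real.exp_add]
      refine mul_le_mul_of_nonneg_right (Real.exp_le_exp.2 ?_) (norm_nonneg _)
      nlinarith

/-- The truncated weight `e^{-γt + h min(t, n)}`: it equals `e^{-(γ-h)t}` for `t ≤ n`, and is a multiple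
of `e^{-γt}` afterwards. -/
noncomputable def truncW (γ h n t : ℝ) : ℝ := Real.exp (-γ * t + h * min t n)

lemma continuous_truncW (γ h n : ℝ) : Continuous (truncW γ h n) := by
  unfold truncW; fun_prop

lemma truncW_pos (γ h n t : ℝ) : 0 < truncW γ h n t := Real.exp_pos _

/-- Compared with `e^{-γt}`, shifting the truncated weight by `ν` costs an additional factor
`e^{h (min(t, n) - min(t - ν, n))}`, which lies between `1` and `e^{hτ}` for `ν ∈ [0, τ]`. -/
lemma truncW_shift (γ h n t ν : ℝ) : (truncW γ h n t : ℂ) =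
    ((Real.exp (h * (min t n - min (t - ν) n)) : ℝ) : ℂ) *
      (Complex.exp (-(γ : ℂ) * ν) * (truncW γ h n (t - ν) : ℂ)) := by
  have : Complex.exp (-(γ : ℂ) * ν) = ((Real.exp (-γ * ν) : ℝ) : ℂ) := by push_cast; rfl
  rw [this, truncW, truncW, ← Complex.ofReal_mul, ← Complex.ofReal_mul, ← Real.exp_add,
    ← Real.exp_add]
  congr 2; ring

lemma shift_factor_bound {h : ℝ} (hh : 0 ≤ h) (n t : ℝ) {ν : ℝ} (hν : ν ∈ Icc 0 τ) :
    ‖((Real.exp (h * (min t n - min (t - ν) n)) : ℝ) : ℂ) - 1‖ₑ ≤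
      ENNReal.ofReal (Real.exp (h * τ) - 1) := by
  have h1 : 0 ≤ min t n - min (t - ν) n := by
    have := min_le_min_right n (show t - ν ≤ t by linarith [hν.1]); linarith
  have h2 : min t n - min (t - ν) n ≤ τ := by
    have : min t n - ν ≤ min (t - ν) n :=
      le_min (by linarith [min_le_left t n]) (by linarith [min_le_right t n, hν.1])
    linarith [hν.2]
  rw [← ofReal_norm]
  apply ENNReal.ofReal_le_ofReal
  rw [← Complex.ofReal_one, ← Complex.ofReal_sub, Complex.norm_real, Real.norm_of_nonneg]
  · gcongr
  · linarith [Real.add_one_le_exp (h * (min t n - min (t - ν) n)), mul_nonneg hh h1]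

/-- The function `Y = truncW · Z` solves the equation conjugated by `e^{-γt}` up to the weighted defect of
`Z` and an error of relative size `e^{hτ} - 1`, which is due to the change of weight. No integrability of
`Z` is required, because the bound is trivial where the majorant is infinite. -/
lemma step_pointwise (hτ : 0 < τ) (hK : Integrable K) (hKs : ∀ ν, ν ∉ Ioc 0 τ → K ν = 0)
    (hZm : AEMeasurable Z) {γ h : ℝ} (hh : 0 < h) (n t : ℝ) :
    let Y : ℝ → ℂ := fun t => (truncW γ h n t : ℂ) * Z t
    ‖Y t - delayOp τ (wCoef τ ξ γ) (wKer K γ) Y t‖ₑ ≤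
      ENNReal.ofReal (truncW γ h n t) * ‖Z t - delayOp τ ξ (fun ν => (K ν : ℂ)) Z t‖ₑ +
      ENNReal.ofReal (Real.exp (h * τ) - 1) *
        delayMaj τ ‖wCoef τ ξ γ‖ₑ (fun ν => ‖wKer K γ ν‖ₑ) (fun x => ‖Y x‖ₑ) t := by
  intro Y
  have hpos : 0 < Real.exp (h * τ) - 1 := by
    have := Real.add_one_lt_exp (mul_pos hh hτ).ne'
    linarith [mul_pos hh hτ]
  by_cases htop : delayMaj τ ‖wCoef τ ξ γ‖ₑ (fun ν => ‖wKer K γ ν‖ₑ) (fun x => ‖Y x‖ₑ) t = ⊤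
  · rw [htop, ENNReal.mul_top (by simpa using hpos)]; simp
  have hYm : AEMeasurable Y :=
    AEMeasurable.mul (Complex.continuous_ofReal.comp (continuous_truncW γ h n)).aemeasurable hZm
  have hYt : AEMeasurable fun ν => Y (t - ν) :=
    hYm.comp_quasiMeasurePreserving (Measure.measurePreserving_sub_left volume t).quasiMeasurePreserving
  have hkm := (integrable_wKer hτ hK hKs γ).1.aemeasurable
  set m : ℝ → ℂ := fun ν => ((Real.exp (h * (min t n - min (t - ν) n)) : ℝ) : ℂ) with hm
  have hmc : Continuous m := by rw [hm]; fun_prop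
  have hint1 : Integrable fun ν => wKer K γ ν * Y (t - ν) := by
    refine ⟨(hkm.mul hYt).aestronglyMeasurable, ?_⟩
    unfold HasFiniteIntegral
    simp only [enorm_mul]
    exact lt_of_le_of_lt le_add_self (lt_top_iff_ne_top.2 htop)
  have hbd : ∀ ν, ‖(m ν - 1) * (wKer K γ ν * Y (t - ν))‖ₑ ≤
      ENNReal.ofReal (Real.exp (h * τ) - 1) * (‖wKer K γ ν‖ₑ * ‖Y (t - ν)‖ₑ) := by
    intro ν
    by_cases hν : ν ∈ Ioc 0 τ
    · rw [enorm_mul, enorm_mul]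
      gcongr
      exact shift_factor_bound hh.le n t ⟨hν.1.le, hν.2⟩
    · simp [wKer_zero hKs hν]
  have hint2 : Integrable fun ν => (m ν - 1) * (wKer K γ ν * Y (t - ν)) := by
    refine ⟨((hmc.sub continuous_const).aemeasurable.mul (hkm.mul hYt)).aestronglyMeasurable, ?_⟩
    unfold HasFiniteIntegral
    refine (lintegral_mono hbd).trans_lt ?_
    rw [lintegral_const_mul' _ _ ENNReal.ofReal_ne_top]
    refine ENNReal.mul_lt_top ENNReal.ofReal_lt_top ?_
    exact lt_of_le_of_lt le_add_self (lt_top_iff_ne_top.2 htop)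
  have hshift : ∀ ν, (truncW γ h n t : ℂ) * (K ν * Z (t - ν)) =
      (m ν - 1) * (wKer K γ ν * Y (t - ν)) + wKer K γ ν * Y (t - ν) := by
    intro ν
    rw [truncW_shift γ h n t ν]
    simp only [wKer, Y, hm]
    ring
  have hid : Y t - delayOp τ (wCoef τ ξ γ) (wKer K γ) Y t =
      (truncW γ h n t : ℂ) * (Z t - delayOp τ ξ (fun ν => (K ν : ℂ)) Z t) +
      ((m τ - 1) * (wCoef τ ξ γ * Y (t - τ)) + ∫ ν, (m ν - 1) * (wKer K γ ν * Y (t - ν))) := by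
    have e1 : (truncW γ h n t : ℂ) * ∫ ν, (K ν : ℂ) * Z (t - ν) =
        (∫ ν, (m ν - 1) * (wKer K γ ν * Y (t - ν))) + ∫ ν, wKer K γ ν * Y (t - ν) := by
      rw [← integral_const_mul, ← integral_add hint2 hint1]
      exact integral_congr_ae (Eventually.of_forall hshift)
    have e2 : (truncW γ h n t : ℂ) * (ξ * Z (t - τ)) =
        (m τ - 1) * (wCoef τ ξ γ * Y (t - τ)) + wCoef τ ξ γ * Y (t - τ) := by
      rw [truncW_shift γ h n t τ]
      simp only [wCoef, Y, hm]
      ring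
    unfold delayOp
    linear_combination e1 + e2
  rw [hid]
  refine (enorm_add_le _ _).trans ?_
  rw [enorm_mul]
  have hw : ‖(truncW γ h n t : ℂ)‖ₑ = ENNReal.ofReal (truncW γ h n t) := enorm_ofReal_exp _
  rw [hw]
  gcongr
  refine (enorm_add_le _ _).trans ?_
  unfold delayMaj
  rw [mul_add, ← lintegral_const_mul' _ _ ENNReal.ofReal_ne_top]
  refine add_le_add ?_ ((enorm_integral_le_lintegral_enorm _).trans (lintegral_mono hbd))
  rw [enorm_mul, enorm_mul]
  gcongr
  exact shift_factor_bound hh.le n t ⟨hτ.le, le_rfl⟩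

/-- Improvement of the weight from `γ` to `γ - h`. If `e^{-γt} Z ∈ L²`, then the truncated weights with
base exponent `γ + h` and increment `2h` turn `Z` into functions in `L¹ ∩ L²`, and coercivity on the line
`Re s = γ + h` absorbs the truncation error when `h` is small. The resulting estimate does not depend
on the truncation parameter `n`, nor on the norm in the hypothesis `hL`, but on the initial datum
only. -/
lemma weight_step (hτ : 0 < τ) (hK : Integrable K) (hKs : ∀ ν, ν ∉ Ioc 0 τ → K ν = 0)
    (hZ : IsCausalSol τ ξ K Z) {γ h b δ : ℝ} (hh : 0 < h) (hγ : |γ - h| ≤ b) (hδ : 0 < δ)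
    (hsym : ∀ s : ℂ, s.re = γ + h → δ ≤ ‖charFn τ ξ K s‖)
    (hsmall : ENNReal.ofReal (Real.exp (2 * h * τ) - 1) * wMass τ ξ K (γ + h) ≤ ENNReal.ofReal (δ / 2))
    (hL : eLpNorm (fun t => ((Real.exp (-γ * t) : ℝ) : ℂ) * Z t) 2 volume < ⊤) :
    eLpNorm (fun t => ((Real.exp (-(γ - h) * t) : ℝ) : ℂ) * Z t) 2 volume ≤
      ENNReal.ofReal (2 / δ) * (ENNReal.ofReal (Real.exp (b * τ)) *
        ((1 + wMass τ ξ K 0) * initNorm Z)) := by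
  obtain ⟨hI, hL2⟩ := weighted_integrable (τ := τ) hZ.meas hZ.supp hh hL
  set z0 : ℝ → ℝ≥0∞ := fun x => ‖(Iio 0).indicator Z x‖ₑ with hz0
  have hz0m : AEMeasurable z0 := (hZ.meas.indicator measurableSet_Iio).enorm
  have hKm : AEMeasurable fun ν => ‖(K ν : ℂ)‖ₑ :=
    (Complex.continuous_ofReal.measurable.comp_aemeasurable hK.1.aemeasurable).enorm
  set H : ℝ → ℝ≥0∞ := fun t => ENNReal.ofReal (Real.exp (b * τ)) *
    (z0 t + delayMaj τ ‖(ξ : ℂ)‖ₑ (fun ν => ‖(K ν : ℂ)‖ₑ) z0 t) with hH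
  have hdm := aemeasurable_delayMaj τ (c := ‖(ξ : ℂ)‖ₑ) hKm hz0m
  have hHm : AEMeasurable H := (hz0m.add hdm).const_mul _
  have hHle : eLpNorm H 2 volume ≤ ENNReal.ofReal (Real.exp (b * τ)) *
      ((1 + wMass τ ξ K 0) * initNorm Z) := by
    have hcm : ∀ (c : NNReal) (f : ℝ → ℝ≥0∞), eLpNorm (fun t => (c : ℝ≥0∞) * f t) 2 volume
        ≤ c * eLpNorm f 2 volume := by
      intro c f
      exact eLpNorm_le_nnreal_smul_eLpNorm_of_ae_le_mul' (Eventually.of_forall fun t => by simp) _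
    refine (hcm _ _).trans ?_
    refine mul_le_mul' le_rfl ?_
    refine (eLpNorm_add_le hz0m.aestronglyMeasurable hdm.aestronglyMeasurable (by norm_num)).trans ?_
    rw [add_mul, one_mul]
    have e0 : eLpNorm z0 2 volume = initNorm Z := eLpNorm_enorm _
    refine add_le_add e0.le ?_
    refine (eLpNorm_delayMaj_le τ hKm hz0m).trans ?_
    rw [e0, wMass_zero]
  refine le_trans ?_ (mul_le_mul' le_rfl hHle)
  have hkm : AEMeasurable fun ν => ‖wKer K (γ + h) ν‖ₑ :=
    (integrable_wKer hτ hK hKs (γ + h)).1.aemeasurable.enorm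
  have key : ∀ n : ℕ, eLpNorm (fun t => (truncW (γ + h) (2 * h) n t : ℂ) * Z t) 2 volume ≤
      ENNReal.ofReal (2 / δ) * eLpNorm H 2 volume := by
    intro n
    set Y : ℝ → ℂ := fun t => (truncW (γ + h) (2 * h) n t : ℂ) * Z t with hY
    have hYm : AEMeasurable Y :=
      AEMeasurable.mul (Complex.continuous_ofReal.comp (continuous_truncW _ _ _)).aemeasurable hZ.meas
    have hYle : ∀ t, ‖Y t‖ ≤ Real.exp (2 * h * n) * ‖((Real.exp (-(γ + h) * t) : ℝ) : ℂ) * Z t‖ := by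
      intro t
      rw [hY, norm_mul, norm_mul, ← mul_assoc, Complex.norm_real, Complex.norm_real, truncW,
        Real.norm_of_nonneg (Real.exp_pos _).le, Real.norm_of_nonneg (Real.exp_pos _).le,
        ← Real.exp_add]
      refine mul_le_mul_of_nonneg_right (Real.exp_le_exp.2 ?_) (norm_nonneg _)
      nlinarith [min_le_right t (n : ℝ)]
    have hY2 : MemLp Y 2 := hL2.of_le_mul hYm.aestronglyMeasurable (Eventually.of_forall hYle)
    have hY1 : Integrable Y := (hI.norm.const_mul _).mono' hYm.aestronglyMeasurable
      (Eventually.of_forall hYle)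
    have hco := coercive_delayOp τ (wCoef τ ξ (γ + h)) (integrable_wKer hτ hK hKs (γ + h)) hY1 hY2
      (δ := δ) (fun ω => by
        have hs := hsym ((γ + h : ℝ) + 2 * Real.pi * ω * Complex.I) (by simp)
        have hf := fourier_kernel (K := K) (γ + h) ω
        change _ ≤ ‖1 - wCoef τ ξ (γ + h) * _ - 𝓕 (fun ν => (K ν : ℂ) * Complex.exp (-((γ + h : ℝ) : ℂ) * ν)) ω‖
        rw [hf]
        refine hs.trans_eq ?_
        unfold charFn wCoef
        rw [mul_assoc (ξ : ℂ), ← Complex.exp_add]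
        congr 5
        ring)
    have hpt : ∀ t, ‖Y t - delayOp τ (wCoef τ ξ (γ + h)) (wKer K (γ + h)) Y t‖ₑ ≤
        H t + ENNReal.ofReal (Real.exp (2 * h * τ) - 1) *
        delayMaj τ ‖wCoef τ ξ (γ + h)‖ₑ (fun ν => ‖wKer K (γ + h) ν‖ₑ) (fun x => ‖Y x‖ₑ) t := by
      intro t
      refine (step_pointwise (ξ := ξ) (γ := γ + h) hτ hK hKs hZ.meas (show 0 < 2 * h by linarith) n t).trans ?_
      refine add_le_add ?_ le_rfl
      by_cases ht : t < 0
      · have hw : truncW (γ + h) (2 * h) n t = Real.exp (-(γ - h) * t) := by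
          rw [truncW, min_eq_left (by linarith [Nat.cast_nonneg (α := ℝ) n])]
          congr 1; ring
        rw [hw]
        exact defect_bound hKs hZ hτ hγ t ht
      · rw [← hZ.eqn t (not_lt.1 ht)]; simp
    set D := delayMaj τ ‖wCoef τ ξ (γ + h)‖ₑ (fun ν => ‖wKer K (γ + h) ν‖ₑ) (fun x => ‖Y x‖ₑ) with hD
    have hDm : AEMeasurable D := aemeasurable_delayMaj τ hkm hYm.enorm
    have hDle : eLpNorm D 2 volume ≤ wMass τ ξ K (γ + h) * eLpNorm Y 2 volume := by
      refine (eLpNorm_delayMaj_le τ hkm hYm.enorm).trans ?_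
      rw [eLpNorm_enorm_eq, wMass]
    have h2 : ENNReal.ofReal δ * eLpNorm Y 2 volume ≤
        eLpNorm H 2 volume + ENNReal.ofReal (δ / 2) * eLpNorm Y 2 volume := by
      refine hco.trans ?_
      refine (eLpNorm_mono_enorm (g := fun t => H t + ENNReal.ofReal (Real.exp (2 * h * τ) - 1) * D t)
        (fun t => hpt t)).trans ?_
      refine (eLpNorm_add_le hHm.aestronglyMeasurable (hDm.const_mul _).aestronglyMeasurable
        (by norm_num)).trans ?_
      refine add_le_add le_rfl ?_
      refine (eLpNorm_le_nnreal_smul_eLpNorm_of_ae_le_mul' (c := (Real.exp (2 * h * τ) - 1).toNNReal) (g := D)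
        (Eventually.of_forall fun t => by simp [ENNReal.ofReal]) _).trans ?_
      rw [ENNReal.smul_def, smul_eq_mul]
      refine (mul_le_mul' le_rfl hDle).trans ?_
      rw [← mul_assoc]
      exact mul_le_mul' hsmall le_rfl
    have hYfin : eLpNorm Y 2 volume ≠ ⊤ := hY2.2.ne
    by_cases hHt : eLpNorm H 2 volume = ⊤
    · rw [hHt, ENNReal.mul_top (by simpa using hδ)]; exact le_top
    lift eLpNorm Y 2 volume to NNReal using hYfin with a
    lift eLpNorm H 2 volume to NNReal using hHt with c
    simp only [ENNReal.ofReal] at h2 ⊢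
    norm_cast at h2 ⊢
    rw [← NNReal.coe_le_coe] at h2 ⊢
    push_cast at h2 ⊢
    rw [Real.coe_toNNReal _ (by positivity), Real.coe_toNNReal _ (by positivity)] at h2
    rw [Real.coe_toNNReal _ (by positivity)]
    rw [div_mul_eq_mul_div, le_div_iff₀ hδ]
    linarith
  rw [← eLpNorm_enorm]
  refine eLpNorm_le_of_eventually_eq
    (f := fun n : ℕ => fun t => ‖(truncW (γ + h) (2 * h) n t : ℂ) * Z t‖ₑ) ?_ ?_
    (fun n => (eLpNorm_enorm _).trans_le (key n))
  · intro n
    exact (AEMeasurable.mul (Complex.continuous_ofReal.comp (continuous_truncW _ _ _)).aemeasurable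
      hZ.meas).enorm
  · intro t
    obtain ⟨n, hn⟩ := exists_nat_ge t
    filter_upwards [eventually_ge_atTop n] with m hm
    have : (n : ℝ) ≤ m := by exact_mod_cast hm
    rw [truncW, min_eq_left (by linarith)]
    congr 5
    ring

end

end

/-! ### Decay of causal solutions -/

section

open MeasureTheory Set FourierTransform Filter Topology
open scoped ENNReal Convolution

section
variable {τ ξ : ℝ} {K : ℝ → ℝ} {Z : ℝ → ℂ}

/-- By dominated convergence `wMass` tends to `0` as the exponent tends to `+∞`. -/
lemma exists_wMass_le_half (hτ : 0 < τ) (hK : Integrable K) (hKs : ∀ ν, ν ∉ Ioc 0 τ → K ν = 0) :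
    ∃ γ : ℝ, 0 ≤ γ ∧ wMass τ ξ K γ ≤ ENNReal.ofReal (1 / 2) := by
  have hexp : ∀ ν : ℝ, 0 < ν →
      Tendsto (fun n : ℕ => Complex.exp (-((n : ℝ) : ℂ) * ν)) atTop (𝓝 0) := by
    intro ν hν
    rw [tendsto_zero_iff_norm_tendsto_zero]
    have h1 : ∀ n : ℕ, ‖Complex.exp (-((n : ℝ) : ℂ) * ν)‖ = Real.exp (-((n : ℝ) * ν)) := by
      intro n; rw [Complex.norm_exp]; congr 1; simp
    simp only [h1]
    exact Real.tendsto_exp_neg_atTop_nhds_zero.comp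
      (tendsto_natCast_atTop_atTop.atTop_mul_const hν)
  have hlim : Tendsto (fun n : ℕ => wMass τ ξ K n) atTop (𝓝 (0 + ∫⁻ _ : ℝ, 0)) := by
    refine Tendsto.add ?_ ?_
    · have := ((hexp τ hτ).const_mul (ξ : ℂ)).enorm
      simpa [wCoef] using this
    · refine tendsto_lintegral_of_dominated_convergence' (fun ν => ‖(K ν : ℂ)‖ₑ)
        (fun n => (integrable_wKer hτ hK hKs n).1.aemeasurable.enorm) ?_ ?_ ?_
      · intro n
        refine Eventually.of_forall fun ν => ?_
        by_cases hν : ν ∈ Ioc 0 τ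
        · simp only [wKer, enorm_mul]
          refine mul_le_of_le_one_right' ?_
          rw [← ofReal_norm, Complex.norm_exp, ENNReal.ofReal_le_one, Real.exp_le_one_iff]
          have : 0 ≤ (n : ℝ) * ν := mul_nonneg (Nat.cast_nonneg n) hν.1.le
          simpa using this
        · simp [wKer_zero hKs hν]
      · exact hK.ofReal.2.ne
      · refine Eventually.of_forall fun ν => ?_
        by_cases hν : ν ∈ Ioc 0 τ
        · have := ((hexp ν hν.1).const_mul (K ν : ℂ)).enorm
          simpa [wKer] using this
        · simp [wKer_zero hKs hν]
  simp only [lintegral_zero, add_zero] at hlim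
  have hpos : (0 : ℝ≥0∞) < ENNReal.ofReal (1 / 2) := by simp
  obtain ⟨n, hn⟩ := (hlim.eventually (gt_mem_nhds hpos)).exists
  exact ⟨n, Nat.cast_nonneg n, hn.le⟩

/-- The interval of length `L` can be divided into `n` steps short enough for `weight_step`. -/
lemma exists_step_size (hτ : 0 < τ) {M : ℝ≥0∞} (hM : M ≠ ⊤) {L δ : ℝ} (hL : 0 < L) (hδ : 0 < δ) :
    ∃ n : ℕ, 0 < n ∧ L / n ≤ 1 ∧
      ENNReal.ofReal (Real.exp (2 * (L / n) * τ) - 1) * M ≤ ENNReal.ofReal (δ / 2) := by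
  have h0 : Tendsto (fun n : ℕ => L / (n : ℝ)) atTop (𝓝 0) := tendsto_const_div_atTop_nhds_zero_nat L
  have h1 : Tendsto (fun n : ℕ => (Real.exp (2 * (L / n) * τ) - 1) * M.toReal) atTop (𝓝 0) := by
    have hc : Continuous fun x : ℝ => (Real.exp (2 * x * τ) - 1) * M.toReal := by fun_prop
    have := (hc.tendsto 0).comp h0
    simpa [Function.comp_def] using this
  obtain ⟨n, hn0, hn1, hn2⟩ := ((eventually_gt_atTop 0).and
    ((h0.eventually (gt_mem_nhds one_pos)).and (h1.eventually (gt_mem_nhds (half_pos hδ))))).exists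
  refine ⟨n, hn0, hn1.le, ?_⟩
  have hpos : 0 ≤ Real.exp (2 * (L / n) * τ) - 1 := by
    have : 0 ≤ 2 * (L / n) * τ := by positivity
    linarith [Real.add_one_le_exp (2 * (L / n) * τ)]
  rw [← ENNReal.ofReal_toReal hM, ← ENNReal.ofReal_mul hpos]
  exact ENNReal.ofReal_le_ofReal hn2.le

/-- Under a spectral gap, `e^{η't} Z ∈ L²` for every causal solution, with a norm controlled by the initial
datum: starting from the exponent `γ0` of `growth_bound`, finitely many applications of `weight_step`
of equal size reach the exponent `-η'`. -/
lemma stable_bound (hτ : 0 < τ) (hK : Integrable K) (hKs : ∀ ν, ν ∉ Ioc 0 τ → K ν = 0)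
    {η : ℝ} (hη : 0 < η) (hroot : ∀ s : ℂ, charFn τ ξ K s = 0 → s.re ≤ -η) :
    ∃ η' : ℝ, 0 < η' ∧ ∃ C : ℝ≥0∞, C ≠ ⊤ ∧ ∀ Z, IsCausalSol τ ξ K Z →
      eLpNorm (fun t => ((Real.exp (η' * t) : ℝ) : ℂ) * Z t) 2 volume ≤ C * initNorm Z := by
  have hξ : |ξ| < 1 := abs_lt_one_of_gap hτ hK hKs hη hroot
  obtain ⟨η', hη'0, hη'η, hη'ξ⟩ : ∃ η' : ℝ, 0 < η' ∧ η' < η ∧ |ξ| * Real.exp (η' * τ) < 1 := by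
    have hc : Continuous fun x : ℝ => |ξ| * Real.exp (x * τ) := by fun_prop
    have h1 : ∀ᶠ x : ℝ in 𝓝 0, |ξ| * Real.exp (x * τ) < 1 :=
      (hc.tendsto 0).eventually_lt_const (by simpa using hξ)
    have h2 : ∀ᶠ x : ℝ in 𝓝 0, x < η := gt_mem_nhds hη
    obtain ⟨x, ⟨hx1, hx2⟩, hx0⟩ := (((h1.and h2).filter_mono nhdsWithin_le_nhds).and
      (self_mem_nhdsWithin (a := (0 : ℝ)) (s := Ioi 0))).exists
    exact ⟨x, hx0, hx2, hx1⟩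
  obtain ⟨γ0, hγ0, hhalf⟩ := exists_wMass_le_half (ξ := ξ) hτ hK hKs
  obtain ⟨δ, hδ, hlow⟩ := charFn_lower_bound hτ hK hKs hroot hη'η hη'ξ (γ0 + 1)
  set M : ℝ≥0∞ := ENNReal.ofReal (Real.exp (η' * τ)) * wMass τ ξ K 0 with hM
  have hW := (wMass_lt_top (ξ := ξ) hτ hK hKs 0).ne
  have hMtop : M ≠ ⊤ := ENNReal.mul_ne_top ENNReal.ofReal_ne_top hW
  obtain ⟨n, hn, hn1, hns⟩ := exists_step_size hτ hMtop (show 0 < γ0 + η' by linarith) hδ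
  set h := (γ0 + η') / n with hh
  have hnpos : (0 : ℝ) < n := by exact_mod_cast hn
  have hhpos : 0 < h := div_pos (by linarith) hnpos
  have hnh : n * h = γ0 + η' := by rw [hh]; field_simp
  have step : ∀ Z, IsCausalSol τ ξ K Z → ∀ j : ℕ, j < n →
      eLpNorm (fun t => ((Real.exp (-(γ0 - j * h) * t) : ℝ) : ℂ) * Z t) 2 volume < ⊤ →
      eLpNorm (fun t => ((Real.exp (-(γ0 - j * h - h) * t) : ℝ) : ℂ) * Z t) 2 volume ≤
      ENNReal.ofReal (2 / δ) * (ENNReal.ofReal (Real.exp ((γ0 + η') * τ)) *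
        ((1 + wMass τ ξ K 0) * initNorm Z)) := by
    intro Z hZ j hj hL
    have hj1 : ((j : ℝ) + 1) * h ≤ γ0 + η' := by
      rw [← hnh]
      have : (j : ℝ) + 1 ≤ n := by exact_mod_cast hj
      gcongr
    have hj0 : 0 ≤ (j : ℝ) * h := by positivity
    refine weight_step hτ hK hKs hZ hhpos (abs_le.2 ⟨by linarith, by linarith⟩) hδ ?_ ?_ hL
    · intro s hs
      exact hlow s (by rw [hs]; constructor <;> linarith)
    · refine le_trans (mul_le_mul' le_rfl ?_) hns
      exact wMass_le hτ hKs hη'0.le (by linarith)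
  have hinit : ∀ Z, IsCausalSol τ ξ K Z → initNorm Z < ⊤ := by
    intro Z hZ
    refine (eLpNorm_mono_enorm fun t => ?_).trans_lt (hZ.loc 0)
    by_cases ht : t < 0
    · rw [indicator_of_mem (show t ∈ Iio 0 from ht), indicator_of_mem (show t ∈ Iic 0 from ht.le)]
    · rw [indicator_of_notMem (show t ∉ Iio 0 from ht)]; simp
  have hCtop : ∀ x : ℝ≥0∞, x ≠ ⊤ → ENNReal.ofReal (2 / δ) * (ENNReal.ofReal (Real.exp ((γ0 + η') * τ)) *
        ((1 + wMass τ ξ K 0) * x)) ≠ ⊤ := by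
    intro x hx
    exact ENNReal.mul_ne_top ENNReal.ofReal_ne_top (ENNReal.mul_ne_top ENNReal.ofReal_ne_top
      (ENNReal.mul_ne_top (ENNReal.add_ne_top.2 ⟨ENNReal.one_ne_top, hW⟩) hx))
  have fin : ∀ Z, IsCausalSol τ ξ K Z → ∀ j : ℕ, j ≤ n →
      eLpNorm (fun t => ((Real.exp (-(γ0 - j * h) * t) : ℝ) : ℂ) * Z t) 2 volume < ⊤ := by
    intro Z hZ j
    induction j with
    | zero =>
      intro _
      simpa using growth_bound hτ hK hKs hZ hγ0 hhalf
    | succ j ih =>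
      intro hj
      have := (step Z hZ j hj (ih (by omega))).trans_lt (hCtop _ (hinit Z hZ).ne).lt_top
      convert this using 7
      push_cast; ring
  -- the steps before the last one are needed for finiteness only: the last one alone gives the constant
  refine ⟨η', hη'0, _, hCtop 1 ENNReal.one_ne_top, fun Z hZ => ?_⟩
  obtain ⟨j, rfl⟩ : ∃ j, n = j + 1 := ⟨n - 1, by omega⟩
  have := step Z hZ j (by omega) (fin Z hZ j (by omega))
  have e : γ0 - j * h - h = -η' := by push_cast at hnh; linarith
  rw [e, neg_neg] at this
  refine this.trans_eq ?_
  ring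

end

end

/-! ### Back to the integral difference equation -/

section

open MeasureTheory Set Filter Topology
open scoped ENNReal

section
variable {τ ξ : ℝ} {N K z : ℝ → ℝ}

/-- If `s` is a root of the characteristic function, then every real-linear functional of `e^{st}`, in
particular its real and its imaginary part, solves the equation. -/
lemma isSolutionIDE_of_root (hN : IntervalIntegrable N volume 0 τ) {s : ℂ}
    (hs : 1 - (ξ : ℂ) * Complex.exp (-s * τ) - ∫ ν in (0:ℝ)..τ, (N ν : ℂ) * Complex.exp (-s * ν) = 0)
    (l : ℂ →L[ℝ] ℝ) : IsSolutionIDE τ ξ N (fun t => l (Complex.exp (s * t))) := by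
  have hc : Continuous fun t : ℝ => l (Complex.exp (s * t)) := by fun_prop
  have hreal : ∀ (r : ℝ) (w : ℂ), l ((r : ℂ) * w) = r * l w := by
    intro r w
    rw [← Complex.real_smul, map_smul, smul_eq_mul]
  have heq : ∀ t : ℝ, l (Complex.exp (s * t)) = ξ * l (Complex.exp (s * (t - τ : ℝ)))
      + ∫ ν in (0:ℝ)..τ, N ν * l (Complex.exp (s * (t - ν : ℝ))) := by
    intro t
    have hint : IntervalIntegrable (fun ν : ℝ => (N ν : ℂ) * Complex.exp (s * (t - ν : ℝ))) volume 0 τ := by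
      refine IntervalIntegrable.mul_continuousOn ?_ (Continuous.continuousOn (by fun_prop))
      exact ⟨hN.1.ofReal, hN.2.ofReal⟩
    have e1 : ∀ ν : ℝ, Complex.exp (s * (t - ν : ℝ)) = Complex.exp (s * t) * Complex.exp (-s * ν) := by
      intro ν
      rw [← Complex.exp_add]
      congr 1; push_cast; ring
    have e2 : Complex.exp (s * t) = ξ * Complex.exp (s * (t - τ : ℝ)) +
        ∫ ν in (0:ℝ)..τ, (N ν : ℂ) * Complex.exp (s * (t - ν : ℝ)) := by
      have e3 : (∫ ν in (0:ℝ)..τ, (N ν : ℂ) * Complex.exp (s * (t - ν : ℝ))) =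
          Complex.exp (s * t) * ∫ ν in (0:ℝ)..τ, (N ν : ℂ) * Complex.exp (-s * ν) := by
        rw [← intervalIntegral.integral_const_mul]
        refine intervalIntegral.integral_congr fun ν _ => ?_
        simp only [e1]; ring
      rw [e3, e1]
      linear_combination Complex.exp (s * t) * hs
    conv_lhs => rw [e2]
    rw [map_add, hreal, ← ContinuousLinearMap.intervalIntegral_comp_comm _ hint]
    simp only [hreal]
  refine ⟨fun T => (hc.pow 2).intervalIntegrable _ _,
    ⟨fun t => l (s * Complex.exp (s * t)), ?_, ?_⟩, ?_, fun t _ => heq t⟩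
  · exact Continuous.intervalIntegrable (by fun_prop) _ _
  · intro θ _
    have hd : ∀ t : ℝ, HasDerivAt (fun t : ℝ => l (Complex.exp (s * t))) (l (s * Complex.exp (s * t))) t := by
      intro t
      have h1 : HasDerivAt (fun t : ℝ => Complex.exp (s * t)) (s * Complex.exp (s * t)) t := by
        have := (((hasDerivAt_id (t : ℂ)).const_mul s).cexp).comp_ofReal
        simpa [mul_comm] using this
      exact l.hasFDerivAt.comp_hasDerivAt t h1
    rw [intervalIntegral.integral_eq_sub_of_hasDerivAt (fun t _ => hd t)
      (Continuous.intervalIntegrable (by fun_prop) _ _)]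
    ring
  · have := heq 0
    simpa using this

/-- Adding the squared decay estimates for `Re e^{st}` and `Im e^{st}`, whose squares add up to
`e^{2 Re(s) t}`, yields `e^{2(Re s + η)t} ≤ C²` for all `t ≥ 0`. -/
lemma root_re_le (hτ : 0 < τ) (hN : IntervalIntegrable N volume 0 τ) {C η : ℝ}
    (hst : ∀ z : ℝ → ℝ, IsSolutionIDE τ ξ N z → ∀ t : ℝ, 0 ≤ t →
      Real.sqrt (∫ θ in (-τ)..0, (z (t + θ)) ^ 2) ≤
        C * Real.exp (-η * t) * Real.sqrt (∫ θ in (-τ)..0, (z θ) ^ 2)) {s : ℂ}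
    (hs : 1 - (ξ : ℂ) * Complex.exp (-s * τ) - ∫ ν in (0:ℝ)..τ, (N ν : ℂ) * Complex.exp (-s * ν) = 0) :
    s.re ≤ -η := by
  by_contra! hlt
  have hsq : ∀ (l : ℂ →L[ℝ] ℝ) (t : ℝ), 0 ≤ t → ∫ θ in (-τ)..0, (l (Complex.exp (s * (t + θ : ℝ)))) ^ 2 ≤
      (C * Real.exp (-η * t)) ^ 2 * ∫ θ in (-τ)..0, (l (Complex.exp (s * θ))) ^ 2 := by
    intro l t ht
    have h := hst _ (isSolutionIDE_of_root hN hs l) t ht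
    have h2 := pow_le_pow_left₀ (Real.sqrt_nonneg _) h 2
    rw [mul_pow, Real.sq_sqrt, Real.sq_sqrt] at h2
    · exact h2
    all_goals exact intervalIntegral.integral_nonneg (by linarith) fun _ _ => sq_nonneg _
  have hsum : ∀ t : ℝ, (∫ θ in (-τ)..0, (Complex.reCLM (Complex.exp (s * (t + θ : ℝ)))) ^ 2) +
      (∫ θ in (-τ)..0, (Complex.imCLM (Complex.exp (s * (t + θ : ℝ)))) ^ 2) =
      Real.exp (2 * s.re * t) * ∫ θ in (-τ)..0, Real.exp (2 * s.re * θ) := by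
    intro t
    rw [← intervalIntegral.integral_add (Continuous.intervalIntegrable (by fun_prop) _ _)
      (Continuous.intervalIntegrable (by fun_prop) _ _), ← intervalIntegral.integral_const_mul]
    refine intervalIntegral.integral_congr fun θ _ => ?_
    simp only [Complex.reCLM_apply, Complex.imCLM_apply]
    have h1 : (Complex.exp (s * (t + θ : ℝ))).re ^ 2 + (Complex.exp (s * (t + θ : ℝ))).im ^ 2 =
        ‖Complex.exp (s * (t + θ : ℝ))‖ ^ 2 := by
      rw [Complex.sq_norm, Complex.normSq_apply]; ring
    rw [h1, Complex.norm_exp, ← Real.exp_nat_mul, ← Real.exp_add]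
    congr 1
    simp; ring
  have hJ : 0 < ∫ θ in (-τ)..0, Real.exp (2 * s.re * θ) :=
    intervalIntegral.intervalIntegral_pos_of_pos
      (Continuous.intervalIntegrable (by fun_prop) _ _) (fun _ => Real.exp_pos _) (by linarith)
  have hbd : ∀ t : ℝ, 0 ≤ t → Real.exp (2 * (s.re + η) * t) ≤ C ^ 2 := by
    intro t ht
    have h1 := add_le_add (hsq Complex.reCLM t ht) (hsq Complex.imCLM t ht)
    rw [hsum, ← mul_add] at h1
    have h2 := hsum 0
    simp only [zero_add, mul_zero, Real.exp_zero, one_mul] at h2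
    rw [h2] at h1
    have h3 := le_of_mul_le_mul_right h1 hJ
    have h4 : Real.exp (2 * (s.re + η) * t) = Real.exp (2 * s.re * t) * Real.exp (2 * η * t) := by
      rw [← Real.exp_add]; congr 1; ring
    have h5 : Real.exp (-η * t) ^ 2 * Real.exp (2 * η * t) = 1 := by
      rw [← Real.exp_nat_mul, ← Real.exp_add, Real.exp_eq_one_iff]; push_cast; ring
    rw [h4]
    calc _ ≤ (C * Real.exp (-η * t)) ^ 2 * Real.exp (2 * η * t) :=
          mul_le_mul_of_nonneg_right h3 (Real.exp_pos _).le
      _ = C ^ 2 := by rw [mul_pow, mul_assoc, h5, mul_one]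
  have hp : 0 < 2 * (s.re + η) := by linarith
  have h1 := hbd (C ^ 2 / (2 * (s.re + η))) (by positivity)
  rw [mul_div_cancel₀ _ hp.ne'] at h1
  linarith [Real.add_one_le_exp (C ^ 2)]

/-- `N` may be replaced by a Borel measurable kernel that vanishes outside `(0, τ]`. -/
lemma exists_measurable_kernel (hτ : 0 < τ) (hN : IntervalIntegrable N volume 0 τ) :
    ∃ K : ℝ → ℝ, Measurable K ∧ Integrable K ∧ (∀ ν, ν ∉ Ioc 0 τ → K ν = 0) ∧
      K =ᵐ[volume.restrict (Ioc 0 τ)] N := by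
  have hN' : IntegrableOn N (Ioc 0 τ) := (intervalIntegrable_iff_integrableOn_Ioc_of_le hτ.le).1 hN
  set M := hN'.1.mk N with hM
  have hMm : Measurable M := hN'.1.stronglyMeasurable_mk.measurable
  have hMN : M =ᵐ[volume.restrict (Ioc 0 τ)] N := hN'.1.ae_eq_mk.symm
  refine ⟨(Ioc 0 τ).indicator M, hMm.indicator measurableSet_Ioc, ?_, fun ν hν => by simp [hν], ?_⟩
  · rw [integrable_indicator_iff measurableSet_Ioc]
    exact hN'.congr hMN.symm
  · exact (indicator_ae_eq_restrict measurableSet_Ioc).trans hMN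

lemma integral_kernel_real (hτ : 0 < τ) (hKs : ∀ ν, ν ∉ Ioc 0 τ → K ν = 0)
    (hKN : K =ᵐ[volume.restrict (Ioc 0 τ)] N) (f : ℝ → ℝ) :
    ∫ ν in (0:ℝ)..τ, N ν * f ν = ∫ ν, K ν * f ν := by
  rw [intervalIntegral.integral_of_le hτ.le,
    ← setIntegral_eq_integral_of_forall_compl_eq_zero (s := Ioc 0 τ)
      (f := fun ν => K ν * f ν) (fun ν hν => by simp [hKs ν hν])]
  refine integral_congr_ae ?_
  filter_upwards [hKN] with ν hν
  rw [hν]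

lemma integral_kernel_complex (hτ : 0 < τ) (hKs : ∀ ν, ν ∉ Ioc 0 τ → K ν = 0)
    (hKN : K =ᵐ[volume.restrict (Ioc 0 τ)] N) (f : ℝ → ℂ) :
    ∫ ν in (0:ℝ)..τ, (N ν : ℂ) * f ν = ∫ ν, (K ν : ℂ) * f ν := by
  rw [intervalIntegral.integral_of_le hτ.le,
    ← setIntegral_eq_integral_of_forall_compl_eq_zero (s := Ioc 0 τ)
      (f := fun ν => (K ν : ℂ) * f ν) (fun ν hν => by simp [hKs ν hν])]
  refine integral_congr_ae ?_
  filter_upwards [hKN] with ν hν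
  rw [hν]

/-- The `L²` norm of `z` on an interval, as a real integral. The measurability of `z` itself is not
needed, since `eLpNorm` depends on `z²` only. -/
lemma eLpNorm_window {a b : ℝ} (hab : a ≤ b) (hz : IntervalIntegrable (fun t => z t ^ 2) volume a b)
    {S : Set ℝ} (hS : S =ᵐ[volume] Ioc a b) :
    eLpNorm (S.indicator fun t => (z t : ℂ)) 2 volume =
      ENNReal.ofReal (Real.sqrt (∫ t in a..b, z t ^ 2)) := by
  rw [eLpNorm_congr_ae (indicator_ae_eq_of_ae_eq_set hS), ← eLpNorm_enorm]
  refine (ENNReal.pow_right_strictMono (n := 2) (by norm_num)).injective ?_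
  show _ ^ 2 = _ ^ 2
  have hz' : IntegrableOn (fun t => z t ^ 2) (Ioc a b) :=
    (intervalIntegrable_iff_integrableOn_Ioc_of_le hab).1 hz
  have hnn : 0 ≤ ∫ t in a..b, z t ^ 2 :=
    intervalIntegral.integral_nonneg hab fun _ _ => sq_nonneg _
  rw [eLpNorm_two_sq, ← ENNReal.ofReal_pow (Real.sqrt_nonneg _), Real.sq_sqrt hnn,
    intervalIntegral.integral_of_le hab,
    ofReal_integral_eq_lintegral_ofReal hz' (Eventually.of_forall fun _ => sq_nonneg _),
    ← lintegral_indicator measurableSet_Ioc]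
  refine lintegral_congr fun t => ?_
  by_cases ht : t ∈ Ioc a b
  · rw [indicator_of_mem ht, indicator_of_mem ht, ← ofReal_norm, Complex.norm_real,
      ← ENNReal.ofReal_pow (norm_nonneg _), Real.norm_eq_abs, sq_abs]
  · simp [indicator_of_notMem ht]

/-- The extension of `z` by zero to the left of `-τ`, with complex values. -/
noncomputable def extendZero (τ : ℝ) (z : ℝ → ℝ) (t : ℝ) : ℂ := (Ici (-τ)).indicator (fun t => (z t : ℂ)) t

/-- Solutions in the sense of `IsSolutionIDE` give causal solutions. The definition of a solution asks for
integrability of `z²` only, so the measurability of `z` has to be derived from the equation. -/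
lemma isCausalSol_extendZero (hτ : 0 < τ) (hKm : Measurable K) (hKs : ∀ ν, ν ∉ Ioc 0 τ → K ν = 0)
    (hKN : K =ᵐ[volume.restrict (Ioc 0 τ)] N) (hz : IsSolutionIDE τ ξ N z) :
    IsCausalSol τ ξ K (extendZero τ z) := by
  obtain ⟨hloc, ⟨g, -, hg⟩, -, heq⟩ := hz
  have heq' : ∀ t, 0 ≤ t → z t = ξ * z (t - τ) + ∫ ν, K ν * z (t - ν) := by
    intro t ht
    rw [← integral_kernel_real hτ hKs hKN]
    exact heq t ht
  refine ⟨?_, ?_, ?_, ?_⟩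
  · have h := measurable_of_solution hτ hKm hKs heq' (measurable_initial hτ hg)
    exact (aemeasurable_indicator_iff measurableSet_Ici).2
      (Complex.continuous_ofReal.measurable.comp_aemeasurable h)
  · intro t ht
    exact indicator_of_notMem (by simpa using ht) _
  · intro t ht
    have hmem : ∀ x, -τ ≤ x → extendZero τ z x = z x := fun x hx => indicator_of_mem (by exact hx) _
    unfold delayOp
    rw [hmem t (by linarith), hmem (t - τ) (by linarith), heq' t ht]
    push_cast
    congr 1
    rw [← integral_complex_ofReal]
    refine integral_congr_ae (Eventually.of_forall fun ν => ?_)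
    by_cases hν : ν ∈ Ioc 0 τ
    · simp only
      rw [hmem (t - ν) (by linarith [hν.2])]
      push_cast; rfl
    · simp [hKs ν hν]
  · intro T
    have hT : -τ ≤ max T 0 := le_trans (by linarith) (le_max_right T 0)
    refine (eLpNorm_mono_enorm (g := (Icc (-τ) (max T 0)).indicator fun t => (z t : ℂ)) fun t => ?_).trans_lt
      ((eLpNorm_window hT (hloc _) Ioc_ae_eq_Icc.symm).trans_lt ENNReal.ofReal_lt_top)
    by_cases h1 : t ∈ Iic T
    · rw [indicator_of_mem h1]
      by_cases h2 : t ∈ Ici (-τ)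
      · rw [extendZero, indicator_of_mem h2,
          indicator_of_mem (show t ∈ Icc (-τ) (max T 0) from ⟨h2, le_trans h1 (le_max_left T 0)⟩)]
      · rw [extendZero, indicator_of_notMem h2]; simp
    · rw [indicator_of_notMem h1]; simp

/-- A spectral gap implies exponential stability: on the window `[t - τ, t]` the weight `e^{η'x}` of
`stable_bound` is at least `e^{-η'τ} e^{η't}`. -/
lemma stable_of_gap (hτ : 0 < τ) (hKm : Measurable K) (hK : Integrable K)
    (hKs : ∀ ν, ν ∉ Ioc 0 τ → K ν = 0) (hKN : K =ᵐ[volume.restrict (Ioc 0 τ)] N)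
    {η : ℝ} (hη : 0 < η) (hroot : ∀ s : ℂ, charFn τ ξ K s = 0 → s.re ≤ -η) :
    ExpStableIDE τ ξ N := by
  obtain ⟨η', hη', C, hC, hbound⟩ := stable_bound hτ hK hKs hη hroot
  refine ⟨Real.exp (η' * τ) * C.toReal, by positivity, η', hη', fun z hz t ht => ?_⟩
  have hZ := isCausalSol_extendZero hτ hKm hKs hKN hz
  have hb := hbound _ hZ
  have hii : IntervalIntegrable (fun t => z t ^ 2) volume (t - τ) t := by
    refine (hz.1 t).mono_set ?_
    rw [uIcc_of_le (by linarith), uIcc_of_le (by linarith)]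
    exact Icc_subset_Icc_left (by linarith)
  have hinit : initNorm (extendZero τ z) = ENNReal.ofReal (Real.sqrt (∫ θ in (-τ)..0, z θ ^ 2)) := by
    rw [← eLpNorm_window (by linarith) (hz.1 0) (Ico_ae_eq_Ioc (a := -τ) (b := 0)), initNorm]
    congr 1
    rw [← Iio_inter_Ici, ← indicator_indicator]
    rfl
  have hshift : ∫ θ in (-τ)..0, z (t + θ) ^ 2 = ∫ x in (t - τ)..t, z x ^ 2 := by
    rw [intervalIntegral.integral_comp_add_left (fun x => z x ^ 2) t, add_zero, ← sub_eq_add_neg]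
  have hwin : ENNReal.ofReal (Real.sqrt (∫ x in (t - τ)..t, z x ^ 2)) ≤
      ENNReal.ofReal (Real.exp (η' * τ) * Real.exp (-η' * t)) *
        eLpNorm (fun t => ((Real.exp (η' * t) : ℝ) : ℂ) * extendZero τ z t) 2 volume := by
    rw [← eLpNorm_window (by linarith) hii (ae_eq_refl _)]
    refine eLpNorm_le_mul_eLpNorm_of_ae_le_mul (Eventually.of_forall fun x => ?_) 2
    by_cases hx : x ∈ Ioc (t - τ) t
    · have hmem : x ∈ Ici (-τ) := by simp only [mem_Ici]; linarith [hx.1]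
      rw [indicator_of_mem hx, extendZero, indicator_of_mem hmem, norm_mul, ← mul_assoc,
        Complex.norm_real (Real.exp _), Real.norm_of_nonneg (Real.exp_pos _).le, ← Real.exp_add,
        ← Real.exp_add]
      refine le_mul_of_one_le_left (norm_nonneg _) (Real.one_le_exp ?_)
      nlinarith [hx.1]
    · rw [indicator_of_notMem hx]; simp; positivity
  rw [hshift, ← ENNReal.ofReal_le_ofReal_iff (by positivity)]
  refine (hwin.trans (mul_le_mul' le_rfl hb)).trans_eq ?_
  rw [hinit, ← ENNReal.ofReal_toReal hC, ENNReal.toReal_ofReal ENNReal.toReal_nonneg,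
    ← ENNReal.ofReal_mul ENNReal.toReal_nonneg, ← ENNReal.ofReal_mul (by positivity)]
  congr 1; ring

end

end

theorem stmt_11 (τ ξ : ℝ) (hτ : 0 < τ) (N : ℝ → ℝ)
    (hN : IntervalIntegrable N volume 0 τ)
    (Δ : ℂ → ℂ)
    (hΔ : ∀ s : ℂ, Δ s = 1 - (ξ : ℂ) * Complex.exp (-s * τ)
      - ∫ ν in (0:ℝ)..τ, (N ν : ℂ) * Complex.exp (-s * ν)) :
    ExpStableIDE τ ξ N ↔ ∃ η : ℝ, 0 < η ∧ ∀ s : ℂ, Δ s = 0 → s.re ≤ -η := by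
  constructor
  · rintro ⟨C, -, η, hη, hst⟩
    refine ⟨η, hη, fun s hs => root_re_le hτ hN hst ?_⟩
    rw [← hΔ, hs]
  · rintro ⟨η, hη, hroot⟩
    obtain ⟨K, hKm, hK, hKs, hKN⟩ := exists_measurable_kernel hτ hN
    refine stable_of_gap hτ hKm hK hKs hKN hη fun s hs => hroot s ?_
    rw [hΔ, integral_kernel_complex hτ hKs hKN]
    exact hs
end

section
/- Let τ = 1, ξ = 1/2, and N(ν) = −(3π²/(16−4π)) ν + (π²+2π)/(16−4π) for ν ∈ [0,1], and define Δ(s) = 1 − (1/2) e^{−s} − ∫₀^1 N(ν) e^{−sν} dν. Then ∫₀^1 N(ν) dν = π/8 < 1/2 = 1 − ξ, and nevertheless Δ(iπ/2) = 0, i.e., Δ has a root on the imaginary axis. Consequently, the condition ∫₀^τ N(ν) dν < 1 − ξ does not imply that Δ has no roots on the imaginary axis. -/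
open MeasureTheory Complex Real

/-!
Write `N ν = -a ν + b`. The mean of `N` over `[0, 1]` is `b - a / 2 = π / 8`, and `π < 4`.
For the root, `(-a ν + b) e^{-sν}` has the primitive `e^{-sν} ((a ν - b) / s + a / s²)`
(`integral_affine_mul_exp`). At `s = iπ/2` one has `e^{-s} = -i`, and the values of `a` and `b`
are exactly those for which the real and imaginary parts of `Δ s` both vanish.
-/

lemma integral_affine_mul_exp (a b s : ℂ) (hs : s ≠ 0) :
    ∫ ν in (0:ℝ)..1, (-a * (ν : ℂ) + b) * Complex.exp (-s * ν) =
      Complex.exp (-s) * ((a - b) / s + a / s ^ 2) - (-b / s + a / s ^ 2) := by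
  have hderiv : ∀ x ∈ Set.uIcc (0:ℝ) 1,
      HasDerivAt (fun ν : ℝ => Complex.exp (-s * ν) * ((a * ν - b) / s + a / s ^ 2))
        ((-a * (x : ℂ) + b) * Complex.exp (-s * x)) x := by
    intro x _
    have hid : HasDerivAt (fun ν : ℝ => (ν : ℂ)) 1 x := Complex.ofRealCLM.hasDerivAt
    have hexp := (hid.const_mul (-s)).cexp
    have haff := (((hid.const_mul a).sub_const b).div_const s).add_const (a / s ^ 2)
    refine (hexp.mul haff).congr_deriv ?_
    field_simp
    ring
  rw [intervalIntegral.integral_eq_sub_of_hasDerivAt hderiv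
    (Continuous.intervalIntegrable (by fun_prop) _ _)]
  simp

theorem stmt_13 (N : ℝ → ℝ)
    (hN : ∀ ν : ℝ, N ν = -(3 * π ^ 2 / (16 - 4 * π)) * ν + (π ^ 2 + 2 * π) / (16 - 4 * π))
    (Δ : ℂ → ℂ)
    (hΔ : ∀ s : ℂ, Δ s = 1 - (1/2 : ℂ) * Complex.exp (-s * 1)
      - ∫ ν in (0:ℝ)..1, (N ν : ℂ) * Complex.exp (-s * ν)) :
    (∫ ν in (0:ℝ)..1, N ν) = π / 8 ∧ π / 8 < 1 - (1/2 : ℝ) ∧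
      Δ (Complex.I * (π / 2 : ℝ)) = 0 := by
  have hlt : π < 4 := Real.pi_lt_four
  have hne : (4 - π : ℝ) ≠ 0 := by linarith
  have h16 : (16 - 4 * π : ℝ) = 4 * (4 - π) := by ring
  refine ⟨?_, by linarith, ?_⟩
  · simp_rw [hN]
    rw [intervalIntegral.integral_add (Continuous.intervalIntegrable (by fun_prop) _ _)
      (Continuous.intervalIntegrable (by fun_prop) _ _), intervalIntegral.integral_const_mul,
      integral_id, intervalIntegral.integral_const, h16]
    simp only [smul_eq_mul]
    field_simp
    ring
  · have hπ : (π : ℂ) ≠ 0 := by exact_mod_cast Real.pi_ne_zero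
    have hneC : (4 - π : ℂ) ≠ 0 := by exact_mod_cast hne
    have hs : Complex.I * ((π / 2 : ℝ) : ℂ) ≠ 0 := by simp [Real.pi_ne_zero]
    have hexp : Complex.exp (-(Complex.I * ((π / 2 : ℝ) : ℂ))) = -Complex.I := by
      rw [show -(Complex.I * ((π / 2 : ℝ) : ℂ)) = -π / 2 * Complex.I by push_cast; ring,
        Complex.exp_neg_pi_div_two_mul_I]
    have hint := integral_affine_mul_exp ((3 * π ^ 2 / (16 - 4 * π) : ℝ) : ℂ)
      (((π ^ 2 + 2 * π) / (16 - 4 * π) : ℝ) : ℂ) _ hs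
    have hcast : ∀ ν : ℝ, (N ν : ℂ) = -((3 * π ^ 2 / (16 - 4 * π) : ℝ) : ℂ) * (ν : ℂ)
        + (((π ^ 2 + 2 * π) / (16 - 4 * π) : ℝ) : ℂ) := by
      intro ν
      rw [hN]
      push_cast
      ring
    rw [hΔ]
    simp_rw [hcast]
    rw [hint, mul_one, hexp, h16]
    push_cast
    have hI := Complex.I_ne_zero
    field_simp
    simp only [Complex.I_sq]
    ring_nf
    simp only [Complex.I_sq]
    ring
end

section
/- Let τ > 0, ξ ∈ ℝ, and let N(ν) = a₀ + a₁ν + a₂ν² + a₃ν³ be a real cubic polynomial, with characteristic function Δ(s) = 1 − ξ e^{−sτ} − ∫₀^τ N(ν) e^{−sν} dν. If ω ∈ ℝ is such that Δ(iω) = 0, then ω⁴ · ( (1 − ξ²) ω⁴ + ( a₀² + 2a₁ − N(τ)² − 2ξ N′(τ) ) ω² − 12 a₃ Δ(0) ) = 0, where N′ is the derivative of N and Δ(0) = 1 − ξ − ∫₀^τ N(ν) dν. -/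
/-!
Repeated integration by parts turns `s⁴ Δ(s)` into `P₀(s) + P₁(s) e^{-sτ}` with polynomials `P₀`,
`P₁` built from the derivatives of `N` at `0` and `τ` (`pow_four_mul_integral_cubic_exp`).
At a root `s = iω` the factor `e^{-sτ}` has modulus one, so `|P₀(iω)|² = |P₁(iω)|²`.
Expanding both sides in powers of `ω`, the coefficient of `ω²` in the difference vanishes, and
that of `ω⁴` is `-12 a₃ Δ(0)` because `(2 N N'' - N'²)' = 2 N N''' = 12 a₃ N`.
-/

open MeasureTheory Complex

/-- Integration by parts for a cubic kernel, multiplied through by `s⁴` so that it also holds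
at `s = 0`. -/
lemma pow_four_mul_integral_cubic_exp (τ : ℝ) (a₀ a₁ a₂ a₃ s : ℂ) :
    s ^ 4 * ∫ ν in (0:ℝ)..τ,
        (a₀ + a₁ * ν + a₂ * (ν : ℂ) ^ 2 + a₃ * (ν : ℂ) ^ 3) * Complex.exp (-s * ν) =
      (a₀ * s ^ 3 + a₁ * s ^ 2 + 2 * a₂ * s + 6 * a₃)
      - Complex.exp (-s * τ) * ((a₀ + a₁ * τ + a₂ * (τ : ℂ) ^ 2 + a₃ * (τ : ℂ) ^ 3) * s ^ 3
        + (a₁ + 2 * a₂ * τ + 3 * a₃ * (τ : ℂ) ^ 2) * s ^ 2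
        + (2 * a₂ + 6 * a₃ * τ) * s + 6 * a₃) := by
  have key : ∀ x : ℝ, HasDerivAt (fun ν : ℝ => -(Complex.exp (-s * ν) *
      ((a₀ + a₁ * ν + a₂ * (ν : ℂ) ^ 2 + a₃ * (ν : ℂ) ^ 3) * s ^ 3
        + (a₁ + 2 * a₂ * ν + 3 * a₃ * (ν : ℂ) ^ 2) * s ^ 2
        + (2 * a₂ + 6 * a₃ * ν) * s + 6 * a₃)))
      (s ^ 4 * ((a₀ + a₁ * x + a₂ * (x : ℂ) ^ 2 + a₃ * (x : ℂ) ^ 3) * Complex.exp (-s * x)))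
      x := by
    intro x
    have h1 : HasDerivAt (fun ν : ℝ => (ν : ℂ)) 1 x := (hasDerivAt_id x).ofReal_comp
    have hE := (h1.const_mul (-s)).cexp
    have hN := (((h1.const_mul a₁).const_add a₀).add ((h1.pow 2).const_mul a₂)).add
      ((h1.pow 3).const_mul a₃)
    have hN1 := ((h1.const_mul (2 * a₂)).const_add a₁).add ((h1.pow 2).const_mul (3 * a₃))
    have hN2 := (h1.const_mul (6 * a₃)).const_add (2 * a₂)
    have h := (hE.mul ((((hN.mul_const (s ^ 3)).add (hN1.mul_const (s ^ 2))).add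
      (hN2.mul_const s)).add_const (6 * a₃))).neg
    refine h.congr_deriv ?_
    simp only [Pi.add_apply, Pi.pow_apply]
    push_cast
    ring
  rw [← intervalIntegral.integral_const_mul,
    intervalIntegral.integral_eq_sub_of_hasDerivAt (fun x _ => key x)
      (Continuous.intervalIntegrable (by fun_prop) _ _)]
  simp
  ring

theorem stmt_17 (τ ξ : ℝ) (hτ : 0 < τ) (a₀ a₁ a₂ a₃ : ℝ) (N : ℝ → ℝ)
    (hN : ∀ ν : ℝ, N ν = a₀ + a₁ * ν + a₂ * ν ^ 2 + a₃ * ν ^ 3)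
    (Δ : ℂ → ℂ)
    (hΔ : ∀ s : ℂ, Δ s = 1 - (ξ : ℂ) * Complex.exp (-s * τ)
      - ∫ ν in (0:ℝ)..τ, (N ν : ℂ) * Complex.exp (-s * ν)) :
    ∀ ω : ℝ, Δ (Complex.I * ω) = 0 →
      ω ^ 4 * ((1 - ξ ^ 2) * ω ^ 4
        + (a₀ ^ 2 + 2 * a₁ - (N τ) ^ 2 - 2 * ξ * deriv N τ) * ω ^ 2
        - 12 * a₃ * (1 - ξ - ∫ ν in (0:ℝ)..τ, N ν)) = 0 := by
  intro ω hω
  have hderiv : deriv N τ = a₁ + 2 * a₂ * τ + 3 * a₃ * τ ^ 2 := by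
    have h1 := hasDerivAt_id τ
    have h := (((h1.const_mul a₁).const_add a₀).add ((h1.pow 2).const_mul a₂)).add
      ((h1.pow 3).const_mul a₃)
    have hNe : N = _ := funext hN
    rw [hNe]
    refine HasDerivAt.deriv (h.congr_deriv ?_)
    simp
    ring
  have hint : ∫ ν in (0:ℝ)..τ, N ν
      = a₀ * τ + a₁ * τ ^ 2 / 2 + a₂ * τ ^ 3 / 3 + a₃ * τ ^ 4 / 4 := by
    have key : ∀ x : ℝ, HasDerivAt
        (fun τ : ℝ => a₀ * τ + a₁ * τ ^ 2 / 2 + a₂ * τ ^ 3 / 3 + a₃ * τ ^ 4 / 4) (N x) x := by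
      intro x
      have h1 := hasDerivAt_id x
      have h := (((h1.const_mul a₀).add (((h1.pow 2).const_mul a₁).div_const 2)).add
        (((h1.pow 3).const_mul a₂).div_const 3)).add (((h1.pow 4).const_mul a₃).div_const 4)
      refine h.congr_deriv ?_
      rw [hN]
      simp
      ring
    have hc : Continuous N := by
      rw [funext hN]
      fun_prop
    rw [intervalIntegral.integral_eq_sub_of_hasDerivAt (fun x _ => key x)
      (hc.intervalIntegrable _ _)]
    simp
  have hI := pow_four_mul_integral_cubic_exp τ a₀ a₁ a₂ a₃ (I * ω)
  rw [hΔ] at hω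
  simp only [hN] at hω
  push_cast at hω
  -- `P₀(iω) = -e^{-iωτ} P₁(iω)`, with real and imaginary parts separated
  have hP : ((ω ^ 4 + a₁ * ω ^ 2 - 6 * a₃ : ℝ) : ℂ) + ((a₀ * ω ^ 3 - 2 * a₂ * ω : ℝ) : ℂ) * I
      = Complex.exp ((-(ω * τ) : ℝ) * I) *
        (((ξ * ω ^ 4 + (a₁ + 2 * a₂ * τ + 3 * a₃ * τ ^ 2) * ω ^ 2 - 6 * a₃ : ℝ) : ℂ)
        + (((a₀ + a₁ * τ + a₂ * τ ^ 2 + a₃ * τ ^ 3) * ω ^ 3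
          - (2 * a₂ + 6 * a₃ * τ) * ω : ℝ) : ℂ) * I) := by
    have hexp : ((-(ω * τ) : ℝ) : ℂ) * I = -(I * ω) * τ := by
      push_cast
      ring
    rw [hexp]
    have h2 : (I : ℂ) ^ 2 = -1 := I_sq
    have h3 : (I : ℂ) ^ 3 = -I := I_pow_three
    have h4 : (I : ℂ) ^ 4 = 1 := I_pow_four
    simp only [mul_pow, h2, h3, h4] at hI
    push_cast
    linear_combination (ω : ℂ) ^ 4 * hω + hI
  have hn := congrArg normSq hP
  rw [map_mul, normSq_add_mul_I, normSq_add_mul_I, normSq_eq_norm_sq, norm_exp_ofReal_mul_I] at hn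
  rw [hderiv, hint, hN]
  linear_combination hn
end

section
/- Let τ > 0, ξ ∈ ℝ with |ξ| < 1, and let N(ν) = a₀ + a₁ν + a₂ν² + a₃ν³ be a real cubic polynomial with a₃ ≥ 0, and let Δ(s) = 1 − ξ e^{−sτ} − ∫₀^τ N(ν) e^{−sν} dν. Assume ∫₀^τ N(ν) dν < 1 − ξ (so that Δ(0) > 0). Set B = a₀² + 2a₁ − N(τ)² − 2ξ N′(τ) and D = B² + 48 a₃ (1 − ξ²) Δ(0). Then every purely imaginary root iω (ω ∈ ℝ) of Δ satisfies ω = ± √( (−B + √D)/(2(1 − ξ²)) ); in particular, Δ has at most two roots on the imaginary axis. -/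
open MeasureTheory Complex

/-!
Repeated integration by parts turns `s⁴ ∫₀^τ N(ν) e^{-sν} dν` into `Q(0) - Q(τ) e^{-sτ}`, where
`Q(ν) = N(ν) s³ + N'(ν) s² + N''(ν) s + N'''(ν)`. Hence a root `s = iω` of `Δ` satisfies
`s⁴ - Q(0) = (ξ s⁴ - Q(τ)) e^{-sτ}`, and since `|e^{-iωτ}| = 1` the two polynomial factors have the
same modulus. In the difference of the squared moduli, everything cancels except
`ω⁴ ((1 - ξ²) ω⁴ + B ω² - 12 a₃ Δ(0))`; the constant term arises because `2 N N'' - N'²` is an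
antiderivative of `12 a₃ N`. As `Δ(0) > 0`, the frequency `ω` is nonzero, so `ω²` is a positive root
of a quadratic with positive leading and nonpositive constant coefficient, which is unique and given
by the quadratic formula.
-/

/-- Four integrations by parts for a cubic kernel, cleared of the denominators `s ^ k` and
therefore valid for every `s`. -/
lemma cubic_laplace (τ a₀ a₁ a₂ a₃ : ℝ) (s : ℂ) :
    s ^ 4 * ∫ ν in (0:ℝ)..τ,
      ((a₀ + a₁ * ν + a₂ * ν ^ 2 + a₃ * ν ^ 3 : ℝ) : ℂ) * Complex.exp (-s * ν) =
    (a₀ * s ^ 3 + a₁ * s ^ 2 + 2 * a₂ * s + 6 * a₃) -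
    ((a₀ + a₁ * τ + a₂ * τ ^ 2 + a₃ * τ ^ 3) * s ^ 3 + (a₁ + 2 * a₂ * τ + 3 * a₃ * τ ^ 2) * s ^ 2
      + (2 * a₂ + 6 * a₃ * τ) * s + 6 * a₃) * Complex.exp (-s * τ) := by
  let F : ℂ → ℂ := fun z =>
    -(((a₀ + a₁ * z + a₂ * z ^ 2 + a₃ * z ^ 3) * s ^ 3 + (a₁ + 2 * a₂ * z + 3 * a₃ * z ^ 2) * s ^ 2
      + (2 * a₂ + 6 * a₃ * z) * s + 6 * a₃) * Complex.exp (-s * z))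
  have hF : ∀ z : ℂ, HasDerivAt F
      (s ^ 4 * ((a₀ + a₁ * z + a₂ * z ^ 2 + a₃ * z ^ 3) * Complex.exp (-s * z))) z := by
    intro z
    have h1 := hasDerivAt_id z
    have h2 := hasDerivAt_pow 2 z
    have h3 := hasDerivAt_pow 3 z
    have hp := (((((h1.const_mul (a₁ : ℂ)).const_add (a₀ : ℂ)).add (h2.const_mul (a₂ : ℂ))).add
      (h3.const_mul (a₃ : ℂ))).mul_const (s ^ 3))
    have hq := ((((h1.const_mul (2 * a₂ : ℂ)).const_add (a₁ : ℂ)).add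
      (h2.const_mul (3 * a₃ : ℂ))).mul_const (s ^ 2))
    have hr := ((h1.const_mul (6 * a₃ : ℂ)).const_add (2 * a₂ : ℂ)).mul_const s
    have he := (h1.const_mul (-s)).cexp
    have h := ((((hp.add hq).add hr).add_const (6 * a₃ : ℂ)).mul he).neg
    refine h.congr_deriv ?_
    simp only [Pi.add_apply, id]
    push_cast
    ring
  have hI := intervalIntegral.integral_eq_sub_of_hasDerivAt
    (a := 0) (b := τ) (fun x _ => (hF (x : ℂ)).comp_ofReal)
    ((by fun_prop : Continuous fun x : ℝ => s ^ 4 * (((a₀ : ℂ) + a₁ * (x : ℂ) + a₂ * (x : ℂ) ^ 2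
      + a₃ * (x : ℂ) ^ 3) * Complex.exp (-s * (x : ℂ)))).intervalIntegrable 0 τ)
  rw [intervalIntegral.integral_const_mul] at hI
  push_cast
  rw [hI]
  simp only [F]
  simp
  ring

lemma cubic_integral (τ a₀ a₁ a₂ a₃ : ℝ) :
    ∫ ν in (0:ℝ)..τ, (a₀ + a₁ * ν + a₂ * ν ^ 2 + a₃ * ν ^ 3) =
      a₀ * τ + a₁ * τ ^ 2 / 2 + a₂ * τ ^ 3 / 3 + a₃ * τ ^ 4 / 4 := by
  have hF : ∀ x : ℝ, HasDerivAt
      (fun x : ℝ => a₀ * x + a₁ / 2 * x ^ 2 + a₂ / 3 * x ^ 3 + a₃ / 4 * x ^ 4)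
      (a₀ + a₁ * x + a₂ * x ^ 2 + a₃ * x ^ 3) x := by
    intro x
    have h := ((((hasDerivAt_id x).const_mul a₀).add ((hasDerivAt_pow 2 x).const_mul (a₁ / 2))).add
      ((hasDerivAt_pow 3 x).const_mul (a₂ / 3))).add ((hasDerivAt_pow 4 x).const_mul (a₃ / 4))
    refine h.congr_deriv ?_
    push_cast
    ring
  rw [intervalIntegral.integral_eq_sub_of_hasDerivAt (fun x _ => hF x)
    ((by fun_prop : Continuous fun x : ℝ =>
      a₀ + a₁ * x + a₂ * x ^ 2 + a₃ * x ^ 3).intervalIntegrable 0 τ)]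
  ring

lemma cubic_deriv (τ a₀ a₁ a₂ a₃ : ℝ) :
    deriv (fun ν : ℝ => a₀ + a₁ * ν + a₂ * ν ^ 2 + a₃ * ν ^ 3) τ =
      a₁ + 2 * a₂ * τ + 3 * a₃ * τ ^ 2 := by
  have h := ((((hasDerivAt_id τ).const_mul a₁).const_add a₀).add
    ((hasDerivAt_pow 2 τ).const_mul a₂)).add ((hasDerivAt_pow 3 τ).const_mul a₃)
  refine (h.congr_deriv ?_).deriv
  push_cast
  ring

/-- Equality of the two moduli at `s = iω`, after clearing denominators. The real and imaginary
parts of `s⁴ - Q(0)` and `ξ s⁴ - Q(τ)` are written out explicitly, with `n₀`, `n₁`, `n₂` standing for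
`N(τ)`, `N'(τ)`, `N''(τ)`. -/
lemma modulus_eq (τ ξ ω a₀ a₁ a₂ a₃ n₀ n₁ n₂ : ℝ)
    (h : (1 : ℂ) * (I * ω) ^ 4 - (a₀ * (I * ω) ^ 3 + a₁ * (I * ω) ^ 2 + 2 * a₂ * (I * ω) + 6 * a₃) =
      (ξ * (I * ω) ^ 4 - (n₀ * (I * ω) ^ 3 + n₁ * (I * ω) ^ 2 + n₂ * (I * ω) + 6 * a₃))
        * Complex.exp (-(I * ω) * τ)) :
    (ω ^ 4 + a₁ * ω ^ 2 - 6 * a₃) ^ 2 + (a₀ * ω ^ 3 - 2 * a₂ * ω) ^ 2 =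
      (ξ * ω ^ 4 + n₁ * ω ^ 2 - 6 * a₃) ^ 2 + (n₀ * ω ^ 3 - n₂ * ω) ^ 2 := by
  have hE : Complex.normSq (Complex.exp (-(I * ω) * τ)) = 1 := by
    have : -(I * (ω : ℂ)) * τ = ((-(ω * τ) : ℝ) : ℂ) * I := by push_cast; ring
    rw [this, Complex.normSq_eq_norm_sq, Complex.norm_exp_ofReal_mul_I]
    norm_num
  have hI3 : I ^ 3 = -I := Complex.I_pow_three
  have hI4 : I ^ 4 = 1 := Complex.I_pow_four
  have hL : (1 : ℂ) * (I * ω) ^ 4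
      - (a₀ * (I * ω) ^ 3 + a₁ * (I * ω) ^ 2 + 2 * a₂ * (I * ω) + 6 * a₃) =
      ((ω ^ 4 + a₁ * ω ^ 2 - 6 * a₃ : ℝ) : ℂ) + ((a₀ * ω ^ 3 - 2 * a₂ * ω : ℝ) : ℂ) * I := by
    simp only [mul_pow, hI3, hI4, Complex.I_sq]
    push_cast
    ring
  have hR : (ξ : ℂ) * (I * ω) ^ 4
      - (n₀ * (I * ω) ^ 3 + n₁ * (I * ω) ^ 2 + n₂ * (I * ω) + 6 * a₃) =
      ((ξ * ω ^ 4 + n₁ * ω ^ 2 - 6 * a₃ : ℝ) : ℂ) + ((n₀ * ω ^ 3 - n₂ * ω : ℝ) : ℂ) * I := by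
    simp only [mul_pow, hI3, hI4, Complex.I_sq]
    push_cast
    ring
  have hnorm := congrArg Complex.normSq h
  rwa [Complex.normSq_mul, hE, hL, hR, Complex.normSq_add_mul_I, Complex.normSq_add_mul_I,
    mul_one] at hnorm

/-- The positive root of a quadratic with positive leading and nonpositive constant coefficient. -/
lemma pos_root_eq {p B c x : ℝ} (hp : 0 < p) (hc : 0 ≤ c) (hx : 0 < x)
    (h : p * x ^ 2 + B * x - c = 0) :
    x = (-B + Real.sqrt (B ^ 2 + 4 * p * c)) / (2 * p) := by
  have hnn : 0 ≤ 2 * p * x + B := by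
    -- `x (p x + B) = c ≥ 0` forces `p x + B ≥ 0`.
    have h1 : 0 ≤ p * x + B := by
      by_contra hneg
      nlinarith [mul_pos hx (neg_pos.mpr (not_le.mp hneg))]
    nlinarith [mul_pos hp hx]
  have hsq : B ^ 2 + 4 * p * c = (2 * p * x + B) ^ 2 := by linear_combination (-4 * p) * h
  rw [hsq, Real.sqrt_sq hnn]
  field_simp
  ring

theorem stmt_18 (τ ξ : ℝ) (hτ : 0 < τ) (hξ : |ξ| < 1)
    (a₀ a₁ a₂ a₃ : ℝ) (ha₃ : 0 ≤ a₃) (N : ℝ → ℝ)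
    (hN : ∀ ν : ℝ, N ν = a₀ + a₁ * ν + a₂ * ν ^ 2 + a₃ * ν ^ 3)
    (Δ : ℂ → ℂ)
    (hΔ : ∀ s : ℂ, Δ s = 1 - (ξ : ℂ) * Complex.exp (-s * τ)
      - ∫ ν in (0:ℝ)..τ, (N ν : ℂ) * Complex.exp (-s * ν))
    (hint : (∫ ν in (0:ℝ)..τ, N ν) < 1 - ξ)
    (Δ₀ B D : ℝ)
    (hΔ₀ : Δ₀ = 1 - ξ - ∫ ν in (0:ℝ)..τ, N ν)
    (hB : B = a₀ ^ 2 + 2 * a₁ - (N τ) ^ 2 - 2 * ξ * deriv N τ)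
    (hD : D = B ^ 2 + 48 * a₃ * (1 - ξ ^ 2) * Δ₀) :
    (∀ ω : ℝ, Δ (Complex.I * ω) = 0 →
      ω = Real.sqrt ((-B + Real.sqrt D) / (2 * (1 - ξ ^ 2))) ∨
      ω = -Real.sqrt ((-B + Real.sqrt D) / (2 * (1 - ξ ^ 2)))) ∧
    {s : ℂ | s.re = 0 ∧ Δ s = 0} ⊆
      {Complex.I * (Real.sqrt ((-B + Real.sqrt D) / (2 * (1 - ξ ^ 2))) : ℝ),
       -(Complex.I * (Real.sqrt ((-B + Real.sqrt D) / (2 * (1 - ξ ^ 2))) : ℝ))} := by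
  obtain rfl : N = fun ν => a₀ + a₁ * ν + a₂ * ν ^ 2 + a₃ * ν ^ 3 := funext hN
  have hΔ₀pos : 0 < Δ₀ := by rw [hΔ₀]; linarith
  have hp : 0 < 1 - ξ ^ 2 := by
    have := (sq_lt_one_iff_abs_lt_one ξ).mpr hξ
    linarith
  have main : ∀ ω : ℝ, Δ (Complex.I * ω) = 0 →
      ω = Real.sqrt ((-B + Real.sqrt D) / (2 * (1 - ξ ^ 2))) ∨
      ω = -Real.sqrt ((-B + Real.sqrt D) / (2 * (1 - ξ ^ 2))) := by
    intro ω hω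
    rw [hΔ] at hω
    have hω0 : ω ≠ 0 := by
      rintro rfl
      simp only [Complex.ofReal_zero, mul_zero, neg_zero, zero_mul, Complex.exp_zero, mul_one,
        intervalIntegral.integral_ofReal] at hω
      have : Δ₀ = 0 := by rw [hΔ₀]; exact_mod_cast hω
      exact hΔ₀pos.ne' this
    have hL := cubic_laplace τ a₀ a₁ a₂ a₃ (I * ω)
    have hmod := modulus_eq τ ξ ω a₀ a₁ a₂ a₃ (a₀ + a₁ * τ + a₂ * τ ^ 2 + a₃ * τ ^ 3)
      (a₁ + 2 * a₂ * τ + 3 * a₃ * τ ^ 2) (2 * a₂ + 6 * a₃ * τ) (by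
        push_cast at hL hω ⊢
        linear_combination (I * (ω : ℂ)) ^ 4 * hω + hL)
    rw [cubic_integral] at hΔ₀
    rw [cubic_deriv] at hB
    have hquad : (1 - ξ ^ 2) * (ω ^ 2) ^ 2 + B * ω ^ 2 - 12 * a₃ * Δ₀ = 0 := by
      refine (mul_eq_zero.mp (?_ : ω ^ 4 * _ = 0)).resolve_left (pow_ne_zero 4 hω0)
      rw [hB, hΔ₀]
      linear_combination hmod
    have hroot := pos_root_eq hp (by positivity) (by positivity) hquad
    have hD' : B ^ 2 + 4 * (1 - ξ ^ 2) * (12 * a₃ * Δ₀) = D := by rw [hD]; ring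
    rw [hD'] at hroot
    rw [← hroot, Real.sqrt_sq_eq_abs]
    rcases abs_choice ω with h | h <;> rw [h] <;> simp
  refine ⟨main, ?_⟩
  rintro s ⟨hre, hs⟩
  have hsI : s = I * (s.im : ℂ) := by
    apply Complex.ext <;> simp [hre]
  rw [hsI] at hs
  rcases main s.im hs with h | h
  · left
    rw [← h]; exact hsI
  · right
    rw [Set.mem_singleton_iff, ← mul_neg, ← Complex.ofReal_neg, ← h]; exact hsI
end

section
/- Let τ > 0, ξ ∈ ℝ, and let N(ν) = Σ_{k=0}^{5} a_k ν^k be a real quintic polynomial, with characteristic function Δ(s) = 1 − ξ e^{−sτ} − ∫₀^τ N(ν) e^{−sν} dν. If ω ∈ ℝ is such that Δ(iω) = 0, then ω⁶ · ( (1 − ξ²) ω⁶ + B ω⁴ + C ω² + 240 a₅ Δ(0) ) = 0, where B = a₀² + 2a₁ − N(τ)² − 2ξ N′(τ), C = a₁² − 12a₃ − 4a₀a₂ − N′(τ)² + 2ξ N‴(τ) + 2 N(τ) N″(τ), and Δ(0) = 1 − ξ − ∫₀^τ N(ν) dν. -/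
/-!
Integrating by parts six times, `s ^ 6 * ∫₀^τ N(ν) e^{-sν} dν = R(0) - R(τ) e^{-sτ}` with
`R(ν) = ∑ k ≤ 5, N⁽ᵏ⁾(ν) s ^ (5 - k)`, so that `s ^ 6 * Δ(s) = P₀(s) + P₁(s) e^{-sτ}` where
`P₀ = s ^ 6 - R(0)` and `P₁ = R(τ) - ξ s ^ 6`. At a root `s = iω` the exponential has modulus one,
hence `|P₀(iω)|² = |P₁(iω)|²`. Expanding this in powers of `ω` gives the claim: the coefficients
below `ω ^ 6` cancel, and that of `ω ^ 6` is `240 a₅ Δ(0)` because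
`2 N N⁗ - 2 N′ N‴ + N″²` has derivative `2 N N⁽⁵⁾ = 240 a₅ N`.
-/

open MeasureTheory Complex Finset

/-- The polynomial `∑ k ≤ 5, N⁽ᵏ⁾(x) s ^ (5 - k)` for the quintic `N` with coefficients `a`;
`-R e^{-sx}` is an antiderivative of `s ^ 6 N(x) e^{-sx}`. -/
noncomputable def quinticR (a : ℕ → ℝ) (s x : ℂ) : ℂ :=
  (a 0 + a 1 * x + a 2 * x ^ 2 + a 3 * x ^ 3 + a 4 * x ^ 4 + a 5 * x ^ 5) * s ^ 5
  + (a 1 + 2 * a 2 * x + 3 * a 3 * x ^ 2 + 4 * a 4 * x ^ 3 + 5 * a 5 * x ^ 4) * s ^ 4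
  + (2 * a 2 + 6 * a 3 * x + 12 * a 4 * x ^ 2 + 20 * a 5 * x ^ 3) * s ^ 3
  + (6 * a 3 + 24 * a 4 * x + 60 * a 5 * x ^ 2) * s ^ 2
  + (24 * a 4 + 120 * a 5 * x) * s + 120 * a 5

lemma hasDerivAt_quintic {𝕜 : Type*} [NontriviallyNormedField 𝕜] (c₀ c₁ c₂ c₃ c₄ c₅ x : 𝕜) :
    HasDerivAt (fun x : 𝕜 => c₀ + c₁ * x + c₂ * x ^ 2 + c₃ * x ^ 3 + c₄ * x ^ 4 + c₅ * x ^ 5)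
      (c₁ + 2 * c₂ * x + 3 * c₃ * x ^ 2 + 4 * c₄ * x ^ 3 + 5 * c₅ * x ^ 4) x := by
  have h := (((((hasDerivAt_const x c₀).add ((hasDerivAt_id x).const_mul c₁)).add
    ((hasDerivAt_pow 2 x).const_mul c₂)).add ((hasDerivAt_pow 3 x).const_mul c₃)).add
    ((hasDerivAt_pow 4 x).const_mul c₄)).add ((hasDerivAt_pow 5 x).const_mul c₅)
  refine h.congr_deriv ?_
  push_cast
  ring

/-- The derivative is padded with a zero leading term so that the lemma can be iterated. -/
lemma deriv_quintic (c₀ c₁ c₂ c₃ c₄ c₅ : ℝ) :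
    deriv (fun x : ℝ => c₀ + c₁ * x + c₂ * x ^ 2 + c₃ * x ^ 3 + c₄ * x ^ 4 + c₅ * x ^ 5) =
      fun x => c₁ + (2 * c₂) * x + (3 * c₃) * x ^ 2 + (4 * c₄) * x ^ 3 + (5 * c₅) * x ^ 4
        + 0 * x ^ 5 := by
  funext x
  rw [(hasDerivAt_quintic c₀ c₁ c₂ c₃ c₄ c₅ x).deriv]
  ring

lemma hasDerivAt_quinticR_mul_exp (a : ℕ → ℝ) (s x : ℂ) :
    HasDerivAt (fun x : ℂ => -(quinticR a s x * exp (-s * x)))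
      (s ^ 6 * ((a 0 + a 1 * x + a 2 * x ^ 2 + a 3 * x ^ 3 + a 4 * x ^ 4 + a 5 * x ^ 5)
        * exp (-s * x))) x := by
  -- `quinticR` regrouped as a quintic in `x`.
  have hR := hasDerivAt_quintic
    ((a 0 : ℂ) * s ^ 5 + a 1 * s ^ 4 + 2 * a 2 * s ^ 3 + 6 * a 3 * s ^ 2 + 24 * a 4 * s + 120 * a 5)
    ((a 1 : ℂ) * s ^ 5 + 2 * a 2 * s ^ 4 + 6 * a 3 * s ^ 3 + 24 * a 4 * s ^ 2 + 120 * a 5 * s)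
    ((a 2 : ℂ) * s ^ 5 + 3 * a 3 * s ^ 4 + 12 * a 4 * s ^ 3 + 60 * a 5 * s ^ 2)
    ((a 3 : ℂ) * s ^ 5 + 4 * a 4 * s ^ 4 + 20 * a 5 * s ^ 3)
    ((a 4 : ℂ) * s ^ 5 + 5 * a 5 * s ^ 4) ((a 5 : ℂ) * s ^ 5) x
  have hE : HasDerivAt (fun x : ℂ => exp (-s * x)) (exp (-s * x) * (-s * 1)) x :=
    ((hasDerivAt_id x).const_mul (-s)).cexp
  have h := (hR.mul hE).neg
  refine (h.congr_deriv ?_).congr_of_eventuallyEq (.of_forall fun y => ?_)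
  · ring
  · simp only [quinticR, Pi.neg_apply, Pi.mul_apply]
    ring

theorem stmt_19 (τ ξ : ℝ) (hτ : 0 < τ) (a : ℕ → ℝ) (N : ℝ → ℝ)
    (hN : ∀ ν : ℝ, N ν = ∑ k ∈ Finset.range 6, a k * ν ^ k)
    (Δ : ℂ → ℂ)
    (hΔ : ∀ s : ℂ, Δ s = 1 - (ξ : ℂ) * Complex.exp (-s * τ)
      - ∫ ν in (0:ℝ)..τ, (N ν : ℂ) * Complex.exp (-s * ν))
    (B C : ℝ)
    (hB : B = (a 0) ^ 2 + 2 * a 1 - (N τ) ^ 2 - 2 * ξ * deriv N τ)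
    (hC : C = (a 1) ^ 2 - 12 * a 3 - 4 * a 0 * a 2 - (deriv N τ) ^ 2
      + 2 * ξ * iteratedDeriv 3 N τ + 2 * N τ * iteratedDeriv 2 N τ) :
    ∀ ω : ℝ, Δ (Complex.I * ω) = 0 →
      ω ^ 6 * ((1 - ξ ^ 2) * ω ^ 6 + B * ω ^ 4 + C * ω ^ 2
        + 240 * a 5 * (1 - ξ - ∫ ν in (0:ℝ)..τ, N ν)) = 0 := by
  intro ω hω
  have hNf : N = fun x : ℝ =>
      a 0 + a 1 * x + a 2 * x ^ 2 + a 3 * x ^ 3 + a 4 * x ^ 4 + a 5 * x ^ 5 := by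
    funext x
    rw [hN]
    simp [Finset.sum_range_succ]
  have hint : ∫ ν in (0:ℝ)..τ, N ν = a 0 * τ + a 1 * τ ^ 2 / 2 + a 2 * τ ^ 3 / 3
      + a 3 * τ ^ 4 / 4 + a 4 * τ ^ 5 / 5 + a 5 * τ ^ 6 / 6 := by
    have hd : ∀ x : ℝ, HasDerivAt (fun x : ℝ => x * (a 0 + a 1 / 2 * x + a 2 / 3 * x ^ 2
        + a 3 / 4 * x ^ 3 + a 4 / 5 * x ^ 4 + a 5 / 6 * x ^ 5)) (N x) x := fun x => by
      refine ((hasDerivAt_id x).mul (hasDerivAt_quintic (a 0) (a 1 / 2) (a 2 / 3) (a 3 / 4)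
        (a 4 / 5) (a 5 / 6) x)).congr_deriv ?_
      rw [hNf]
      simp only [id]
      ring
    rw [intervalIntegral.integral_eq_sub_of_hasDerivAt (fun x _ => hd x)
      (Continuous.intervalIntegrable (by rw [hNf]; fun_prop) _ _)]
    ring
  set s : ℂ := I * ω with hs
  have hintC : s ^ 6 * ∫ ν in (0:ℝ)..τ, (N ν : ℂ) * exp (-s * ν)
      = quinticR a s 0 - quinticR a s τ * exp (-s * τ) := by
    rw [← intervalIntegral.integral_const_mul,
      intervalIntegral.integral_eq_sub_of_hasDerivAt
        (f := fun x : ℝ => -(quinticR a s x * exp (-s * x)))]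
    · simp
      ring
    · intro x _
      refine (hasDerivAt_quinticR_mul_exp a s x).comp_ofReal.congr_deriv ?_
      rw [hNf]
      push_cast
      rfl
    · exact Continuous.intervalIntegrable (by rw [hNf]; fun_prop) _ _
  have hroot : s ^ 6 - quinticR a s 0 = -((quinticR a s τ - ξ * s ^ 6) * exp (-s * τ)) := by
    rw [hΔ] at hω
    linear_combination s ^ 6 * hω + hintC
  have hexp : normSq (exp (-s * τ)) = 1 := by
    rw [normSq_eq_norm_sq, norm_exp]
    simp [hs]
  have hmod : normSq (s ^ 6 - quinticR a s 0) = normSq (quinticR a s τ - ξ * s ^ 6) := by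
    rw [hroot]
    simp only [normSq_mul, normSq_neg, hexp, mul_one]
  -- The even and odd powers of `iω` give the real and imaginary parts of `P₀` and `P₁`.
  have hI : I ^ 2 = -1 := I_sq
  have h0 : s ^ 6 - quinticR a s 0
      = ((-ω ^ 6 - a 1 * ω ^ 4 + 6 * a 3 * ω ^ 2 - 120 * a 5 : ℝ) : ℂ)
        + ((-a 0 * ω ^ 5 + 2 * a 2 * ω ^ 3 - 24 * a 4 * ω : ℝ) : ℂ) * I := by
    unfold quinticR
    rw [hs]
    push_cast
    have h3 : I ^ 3 = -I := I_pow_three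
    have h4 : I ^ 4 = 1 := I_pow_four
    have h5 : I ^ 5 = I := by rw [pow_succ, h4, one_mul]
    have h6 : I ^ 6 = -1 := by rw [pow_succ, h5, I_mul_I]
    simp only [mul_pow, hI, h3, h4, h5, h6]
    ring
  have h1 : quinticR a s τ - ξ * s ^ 6
      = ((ξ * ω ^ 6
          + (a 1 + 2 * a 2 * τ + 3 * a 3 * τ ^ 2 + 4 * a 4 * τ ^ 3 + 5 * a 5 * τ ^ 4) * ω ^ 4
          - (6 * a 3 + 24 * a 4 * τ + 60 * a 5 * τ ^ 2) * ω ^ 2 + 120 * a 5 : ℝ) : ℂ)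
        + (((a 0 + a 1 * τ + a 2 * τ ^ 2 + a 3 * τ ^ 3 + a 4 * τ ^ 4 + a 5 * τ ^ 5) * ω ^ 5
          - (2 * a 2 + 6 * a 3 * τ + 12 * a 4 * τ ^ 2 + 20 * a 5 * τ ^ 3) * ω ^ 3
          + (24 * a 4 + 120 * a 5 * τ) * ω : ℝ) : ℂ) * I := by
    unfold quinticR
    rw [hs]
    push_cast
    have h3 : I ^ 3 = -I := I_pow_three
    have h4 : I ^ 4 = 1 := I_pow_four
    have h5 : I ^ 5 = I := by rw [pow_succ, h4, one_mul]
    have h6 : I ^ 6 = -1 := by rw [pow_succ, h5, I_mul_I]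
    simp only [mul_pow, hI, h3, h4, h5, h6]
    ring
  rw [h0, h1, normSq_add_mul_I, normSq_add_mul_I] at hmod
  rw [hB, hC, hint]
  simp only [iteratedDeriv_succ, iteratedDeriv_zero, hNf, deriv_quintic]
  linear_combination hmod
end
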